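/- For data f, g ∈ C_0^∞(B(0,1)) and k ≤ ⌊d/2⌋ + 1, the hyperboloidal energies of iterated boosts of the solution φ of □_m φ = 0 (m ≤ m₀) satisfy E_m(L^{i₁}⋯L^{i_k} φ, τ) ≤ C (‖f‖²_{H^{k+1}} + ‖g‖²_{H^k}) for all τ, with C depending only on d and m₀. -/

import Mathlib

open MeasureTheory Real

noncomputable section

/-- Spatial slice: ℝ^d as Euclidean space. -/
abbrev Spc (d : ℕ) := EuclideanSpace ℝ (Fin d)

/-- Time derivative ∂ₜ. -/
def dt {d : ℕ} (φ : ℝ × Spc d → ℝ) (p : ℝ × Spc d) : ℝ := fderiv ℝ φ p (1, 0)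

/-- Spatial derivative ∂_{xⁱ}. -/
def dx {d : ℕ} (i : Fin d) (φ : ℝ × Spc d → ℝ) (p : ℝ × Spc d) : ℝ :=
  fderiv ℝ φ p (0, EuclideanSpace.single i 1)

/-- Lorentz boost Lⁱ = xⁱ ∂ₜ + t ∂_{xⁱ}. -/
def boost {d : ℕ} (i : Fin d) (φ : ℝ × Spc d → ℝ) (p : ℝ × Spc d) : ℝ :=
  p.2 i * dt φ p + p.1 * dx i φ p

/-- Klein–Gordon operator □ₘ = -∂ₜₜ + Δ - m². -/
def box {d : ℕ} (m : ℝ) (φ : ℝ × Spc d → ℝ) (p : ℝ × Spc d) : ℝ :=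
  -(dt (dt φ) p) + (∑ i, dx i (dx i φ) p) - m ^ 2 * φ p

/-- Spatial derivative for functions on ℝ^d. -/
def dxs {d : ℕ} (i : Fin d) (f : Spc d → ℝ) (x : Spc d) : ℝ :=
  fderiv ℝ f x (EuclideanSpace.single i 1)

/-- Laplacian on ℝ^d. -/
def lap {d : ℕ} (f : Spc d → ℝ) (x : Spc d) : ℝ := ∑ i, dxs i (dxs i f) x

/-- Iterated Lorentz boosts L^{i₁} ⋯ L^{i_k} indexed by a list of directions. -/
def boostList {d : ℕ} (l : List (Fin d)) (φ : ℝ × Spc d → ℝ) : ℝ × Spc d → ℝ :=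
  l.foldr (fun i ψ => boost i ψ) φ

/-- The hyperboloidal energy E_m(φ, τ) (hyperboloid parametrized by
x ↦ (√(τ² + |x|²), x), with induced volume form (τ/t)dx). -/
def energy {d : ℕ} (m τ : ℝ) (φ : ℝ × Spc d → ℝ) : ℝ :=
  ∫ x : Spc d,
    (fun t => (fun p : ℝ × Spc d =>
      ((1 / (t * τ)) * ∑ i, (boost i φ p) ^ 2 + (τ / t) * (dt φ p) ^ 2
          + (t / τ) * m ^ 2 * (φ p) ^ 2) * (τ / t))
      (t, x)) (Real.sqrt (τ ^ 2 + ‖x‖ ^ 2))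

/-- Squared Sobolev H^s norm (integer s): sum of squared L² norms of derivatives. -/
def HnormSq {d : ℕ} (s : ℕ) (f : Spc d → ℝ) : ℝ :=
  ∑ j ∈ Finset.range (s + 1), ∫ x, ‖iteratedFDeriv ℝ j f x‖ ^ 2

/-!
Boosts commute with `□ₘ`, so a boosted solution solves the same equation. Its Cauchy data at the
initial time are polynomial in `x` times derivatives of the data of `φ`: the equation
`∂ₜ²φ = Δφ - m²φ` removes the second time derivatives, and the weights `xⁱ` are bounded on the
supports of the data. Hence `l.length` boosts cost `l.length` derivatives in `L²`.

The hyperboloidal energy is the flux of the energy current through the graph of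
`h x = √(τ² + ‖x‖²)`. Since `|∇h| ≤ 1`, this flux is nonnegative by Cauchy–Schwarz. The current is
divergence free, so deforming the slice into the graph along vertical segments compares the two
fluxes once the current is cut off in space. The cutoff is a function of `t + h x`, whose level sets
are weakly spacelike, so that its derivative contributes with the favourable sign; being monotone
in the cutoff, the bound survives its removal.
-/

open Filter Topology
open scoped ContDiff

section Fderiv

variable {E : Type*} [NormedAddCommGroup E] [NormedSpace ℝ E]

theorem contDiff_fderiv_apply_const {n k : ℕ∞ω} {F : E → ℝ} (hF : ContDiff ℝ n F)
    (hk : k + 1 ≤ n) (v : E) : ContDiff ℝ k fun p => fderiv ℝ F p v :=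
  (hF.fderiv_right hk).clm_apply contDiff_const

theorem fderiv_mul_apply {F G : E → ℝ} {p : E} (hF : DifferentiableAt ℝ F p)
    (hG : DifferentiableAt ℝ G p) (v : E) :
    fderiv ℝ (fun q => F q * G q) p v = fderiv ℝ F p v * G p + F p * fderiv ℝ G p v := by
  rw [fderiv_fun_mul hF hG]
  simp only [add_apply, smul_apply, smul_eq_mul]
  ring

theorem fderiv_fderiv_apply_comm {F : E → ℝ} (hF : ContDiff ℝ 2 F) (p v w : E) :
    fderiv ℝ (fun q => fderiv ℝ F q w) p v = fderiv ℝ (fun q => fderiv ℝ F q v) p w := by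
  have hDF : DifferentiableAt ℝ (fderiv ℝ F) p :=
    (hF.fderiv_right (m := 1) le_rfl).differentiable one_ne_zero p
  have hsymm : IsSymmSndFDerivAt ℝ F p := hF.contDiffAt.isSymmSndFDerivAt (by simp)
  simpa [fderiv_clm_apply hDF (differentiableAt_const _)] using hsymm.eq v w

end Fderiv

section Boost

variable {d : ℕ} {φ : ℝ × Spc d → ℝ} {n k : ℕ∞ω}

theorem contDiff_dt (hφ : ContDiff ℝ n φ) (hk : k + 1 ≤ n) : ContDiff ℝ k (dt φ) :=
  contDiff_fderiv_apply_const hφ hk _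

theorem contDiff_dx (i : Fin d) (hφ : ContDiff ℝ n φ) (hk : k + 1 ≤ n) : ContDiff ℝ k (dx i φ) :=
  contDiff_fderiv_apply_const hφ hk _

theorem contDiff_snd_coord (i : Fin d) : ContDiff ℝ n fun p : ℝ × Spc d => p.2 i :=
  (EuclideanSpace.proj (𝕜 := ℝ) i).contDiff.comp contDiff_snd

theorem contDiff_boost (i : Fin d) (hφ : ContDiff ℝ n φ) (hk : k + 1 ≤ n) :
    ContDiff ℝ k (boost i φ) :=
  ((contDiff_snd_coord i).mul (contDiff_dt hφ hk)).add (contDiff_fst.mul (contDiff_dx i hφ hk))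

theorem fderiv_snd_coord (i : Fin d) (p v : ℝ × Spc d) :
    fderiv ℝ (fun q : ℝ × Spc d => q.2 i) p v = v.2 i := by
  have h := ((EuclideanSpace.proj (𝕜 := ℝ) i).comp
    (ContinuousLinearMap.snd ℝ ℝ (Spc d))).hasFDerivAt (x := p)
  exact congrArg (· v) h.fderiv

theorem boost_eq_fderiv (i : Fin d) (φ : ℝ × Spc d → ℝ) (p : ℝ × Spc d) :
    boost i φ p = fderiv ℝ φ p (p.2 i, p.1 • EuclideanSpace.single i 1) := by
  have hvec : ((p.2 i, p.1 • EuclideanSpace.single i 1) : ℝ × Spc d)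
      = p.2 i • (1, 0) + p.1 • (0, EuclideanSpace.single i 1) := by
    ext <;> simp
  rw [hvec, map_add, map_smul, map_smul]
  rfl

theorem fderiv_boost_apply (i : Fin d) (hφ : ContDiff ℝ 2 φ) (p v : ℝ × Spc d) :
    fderiv ℝ (boost i φ) p v
      = v.2 i * dt φ p + v.1 * dx i φ p + boost i (fun q => fderiv ℝ φ q v) p := by
  have hdt : DifferentiableAt ℝ (dt φ) p :=
    (contDiff_dt hφ (k := 1) le_rfl).differentiable one_ne_zero p
  have hdx : DifferentiableAt ℝ (dx i φ) p :=
    (contDiff_dx i hφ (k := 1) le_rfl).differentiable one_ne_zero p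
  have hx : DifferentiableAt ℝ (fun q : ℝ × Spc d => q.2 i) p :=
    (contDiff_snd_coord (n := 1) i).differentiable one_ne_zero p
  have hadd : fderiv ℝ (boost i φ) p v = fderiv ℝ (fun q => q.2 i * dt φ q) p v
      + fderiv ℝ (fun q => q.1 * dx i φ q) p v :=
    congrArg (· v) (fderiv_fun_add (hx.mul hdt) (differentiableAt_fst.mul hdx))
  have hdt' : fderiv ℝ (dt φ) p v = dt (fun q => fderiv ℝ φ q v) p :=
    fderiv_fderiv_apply_comm hφ p v _
  have hdx' : fderiv ℝ (dx i φ) p v = dx i (fun q => fderiv ℝ φ q v) p :=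
    fderiv_fderiv_apply_comm hφ p v _
  rw [hadd, fderiv_mul_apply hx hdt, fderiv_mul_apply differentiableAt_fst hdx,
    fderiv_snd_coord, fderiv_fst, hdt', hdx', boost]
  simp only [ContinuousLinearMap.coe_fst']
  ring

theorem fderiv_fderiv_boost_apply (i : Fin d) (hφ : ContDiff ℝ 3 φ) (p v : ℝ × Spc d) :
    fderiv ℝ (fun q => fderiv ℝ (boost i φ) q v) p v
      = 2 * (v.2 i * fderiv ℝ (dt φ) p v + v.1 * fderiv ℝ (dx i φ) p v)
        + boost i (fun q => fderiv ℝ (fun r => fderiv ℝ φ r v) q v) p := by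
  have hφ' : ContDiff ℝ 2 φ := hφ.of_le (by norm_num)
  have hφv : ContDiff ℝ 2 fun q => fderiv ℝ φ q v :=
    contDiff_fderiv_apply_const hφ (by norm_num) v
  have hdt : DifferentiableAt ℝ (dt φ) p :=
    (contDiff_dt hφ' (k := 1) le_rfl).differentiable one_ne_zero p
  have hdx : DifferentiableAt ℝ (dx i φ) p :=
    (contDiff_dx i hφ' (k := 1) le_rfl).differentiable one_ne_zero p
  have hboost : DifferentiableAt ℝ (boost i fun q => fderiv ℝ φ q v) p :=
    (contDiff_boost i hφv (k := 1) le_rfl).differentiable one_ne_zero p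
  have hdt' : dt (fun q => fderiv ℝ φ q v) p = fderiv ℝ (dt φ) p v :=
    fderiv_fderiv_apply_comm hφ' p _ v
  have hdx' : dx i (fun q => fderiv ℝ φ q v) p = fderiv ℝ (dx i φ) p v :=
    fderiv_fderiv_apply_comm hφ' p _ v
  simp_rw [fderiv_boost_apply i hφ']
  rw [fderiv_fun_add ((hdt.const_mul _).fun_add (hdx.const_mul _)) hboost,
    fderiv_fun_add (hdt.const_mul _) (hdx.const_mul _), fderiv_const_mul hdt,
    fderiv_const_mul hdx]
  simp only [add_apply, smul_apply, smul_eq_mul]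
  rw [fderiv_boost_apply i hφv, hdt', hdx']
  ring

theorem dt_boost (i : Fin d) (hφ : ContDiff ℝ 2 φ) (p : ℝ × Spc d) :
    dt (boost i φ) p = dx i φ p + boost i (dt φ) p := by
  have h := fderiv_boost_apply i hφ p (1, 0)
  simp only [PiLp.zero_apply, zero_mul, one_mul, zero_add] at h
  exact h

theorem boost_box (m : ℝ) (i : Fin d) (hφ : ContDiff ℝ 3 φ) (p : ℝ × Spc d) :
    boost i (box m φ) p
      = -boost i (dt (dt φ)) p + ∑ j, boost i (dx j (dx j φ)) p - m ^ 2 * boost i φ p := by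
  have hφp : DifferentiableAt ℝ φ p := hφ.differentiable (by norm_num) p
  have hdt : DifferentiableAt ℝ (dt (dt φ)) p :=
    (contDiff_dt (contDiff_dt hφ (k := 2) (by norm_num)) (k := 1)
      (by norm_num)).differentiable one_ne_zero p
  have hdx (j) : DifferentiableAt ℝ (dx j (dx j φ)) p :=
    (contDiff_dx j (contDiff_dx j hφ (k := 2) (by norm_num)) (k := 1)
      (by norm_num)).differentiable one_ne_zero p
  have hsum : DifferentiableAt ℝ (fun q => ∑ j, dx j (dx j φ) q) p :=
    DifferentiableAt.fun_sum fun j _ => hdx j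
  have hbox : box m φ = fun q => -dt (dt φ) q + ∑ j, dx j (dx j φ) q - m ^ 2 * φ q := rfl
  simp only [boost_eq_fderiv, hbox]
  rw [fderiv_fun_sub (hdt.fun_neg.fun_add hsum) (hφp.const_mul _), fderiv_fun_add hdt.fun_neg hsum,
    fderiv_fun_neg, fderiv_fun_sum fun j _ => hdx j, fderiv_const_mul hφp]
  simp

theorem box_boost (m : ℝ) (i : Fin d) (hφ : ContDiff ℝ 3 φ) (p : ℝ × Spc d) :
    box m (boost i φ) p = boost i (box m φ) p := by
  have hdt : dt (dt (boost i φ)) p = 2 * dt (dx i φ) p + boost i (dt (dt φ)) p := by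
    have h := fderiv_fderiv_boost_apply i hφ p (1, 0)
    simp only [PiLp.zero_apply, zero_mul, one_mul, zero_add] at h
    exact h
  have hdx (j) : dx j (dx j (boost i φ)) p
      = (if i = j then 2 * dx j (dt φ) p else 0) + boost i (dx j (dx j φ)) p := by
    have h := fderiv_fderiv_boost_apply i hφ p (0, EuclideanSpace.single j 1)
    simp only [PiLp.single_apply, zero_mul, add_zero, ite_mul, one_mul, mul_ite, mul_zero] at h
    exact h
  have hcomm : dt (dx i φ) p = dx i (dt φ) p :=
    fderiv_fderiv_apply_comm (hφ.of_le (by norm_num)) p _ _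
  -- the commutator terms `-2 ∂ₜ∂ᵢφ` of `-∂ₜ²` and `2 ∂ᵢ∂ₜφ` of `Δ` cancel
  rw [boost_box m i hφ, box, hdt]
  simp only [hdx, Finset.sum_add_distrib, Finset.sum_ite_eq, Finset.mem_univ, if_true, hcomm]
  ring

theorem contDiff_boostList (l : List (Fin d)) {n : ℕ} (hφ : ContDiff ℝ (n + l.length : ℕ) φ) :
    ContDiff ℝ n (boostList l φ) := by
  induction l generalizing n with
  | nil => exact hφ
  | cons i l ih =>
    refine contDiff_boost i (ih (n := n + 1) ?_) le_rfl
    rwa [show n + 1 + l.length = n + (i :: l).length by rw [List.length_cons]; ring]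

theorem box_boostList {m : ℝ} (l : List (Fin d)) (hφ : ContDiff ℝ (l.length + 2 : ℕ) φ)
    (hbox : ∀ p, box m φ p = 0) (p : ℝ × Spc d) : box m (boostList l φ) p = 0 := by
  induction l generalizing p with
  | nil => exact hbox p
  | cons i l ih =>
    have hψ : ContDiff ℝ 3 (boostList l φ) :=
      contDiff_boostList l (n := 3) (by
        rwa [show 3 + l.length = (i :: l).length + 2 by rw [List.length_cons]; ring])
    have hzero : box m (boostList l φ) = 0 :=
      funext (ih (hφ.of_le (by exact_mod_cast (by simp))))
    have : boost i (0 : ℝ × Spc d → ℝ) p = 0 := by simp [boost_eq_fderiv]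
    exact (box_boost m i hψ p).trans (by rwa [hzero])

end Boost

section Graph

variable {d : ℕ} {F : ℝ × Spc d → ℝ}

theorem dxs_comp_graph (i : Fin d) {w : Spc d → ℝ} {x : Spc d}
    (hF : DifferentiableAt ℝ F (w x, x)) (hw : DifferentiableAt ℝ w x) :
    dxs i (fun y => F (w y, y)) x = dxs i w x * dt F (w x, x) + dx i F (w x, x) := by
  have hgraph : HasFDerivAt (fun y => (w y, y))
      ((fderiv ℝ w x).prod (ContinuousLinearMap.id ℝ (Spc d))) x :=
    hw.hasFDerivAt.prodMk (hasFDerivAt_id x)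
  have hvec : ((fderiv ℝ w x (EuclideanSpace.single i 1), EuclideanSpace.single i 1) : ℝ × Spc d)
      = fderiv ℝ w x (EuclideanSpace.single i 1) • (1, 0) + (0, EuclideanSpace.single i 1) := by
    ext <;> simp
  calc dxs i (fun y => F (w y, y)) x
      = fderiv ℝ F (w x, x) (fderiv ℝ w x (EuclideanSpace.single i 1), EuclideanSpace.single i 1) :=
        congrArg (· (EuclideanSpace.single i 1))
          (HasFDerivAt.comp (f := fun y => (w y, y)) x hF.hasFDerivAt hgraph).fderiv
    _ = dxs i w x * dt F (w x, x) + dx i F (w x, x) := by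
        rw [hvec, map_add, map_smul]
        rfl

theorem dxs_slice (i : Fin d) {t : ℝ} {x : Spc d} (hF : DifferentiableAt ℝ F (t, x)) :
    dxs i (fun y => F (t, y)) x = dx i F (t, x) := by
  have h := dxs_comp_graph i (w := fun _ => t) hF (differentiableAt_const t)
  simpa [dxs] using h

theorem hasDerivAt_time {t : ℝ} {x : Spc d} (hF : DifferentiableAt ℝ F (t, x)) :
    HasDerivAt (fun r => F (r, x)) (dt F (t, x)) t :=
  HasFDerivAt.comp_hasDerivAt t hF.hasFDerivAt ((hasDerivAt_id t).prodMk (hasDerivAt_const t x))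

end Graph

section BoostData

variable {d : ℕ} {φ : ℝ × Spc d → ℝ}

theorem boost_slice (i : Fin d) {t : ℝ} {x : Spc d} (hφ : DifferentiableAt ℝ φ (t, x)) :
    boost i φ (t, x) = x i * dt φ (t, x) + t * dxs i (fun y => φ (t, y)) x := by
  rw [dxs_slice i hφ, boost]

theorem lap_slice (hφ : ContDiff ℝ 2 φ) (t : ℝ) (x : Spc d) :
    lap (fun y => φ (t, y)) x = ∑ i, dx i (dx i φ) (t, x) := by
  refine Finset.sum_congr rfl fun i _ => ?_
  have hfirst : dxs i (fun y => φ (t, y)) = fun y => dx i φ (t, y) :=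
    funext fun y => dxs_slice i (hφ.differentiable (by norm_num) _)
  rw [hfirst, dxs_slice i ((contDiff_dx i hφ (k := 1) le_rfl).differentiable one_ne_zero _)]

theorem dt_boost_slice {m : ℝ} (i : Fin d) (hφ : ContDiff ℝ 2 φ) (hbox : ∀ p, box m φ p = 0)
    (t : ℝ) (x : Spc d) :
    dt (boost i φ) (t, x)
      = x i * (lap (fun y => φ (t, y)) x - m ^ 2 * φ (t, x))
        + (dxs i (fun y => φ (t, y)) x + t * dxs i (fun y => dt φ (t, y)) x) := by
  have hwave : dt (dt φ) (t, x) = lap (fun y => φ (t, y)) x - m ^ 2 * φ (t, x) := by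
    rw [lap_slice hφ]
    linarith [hbox (t, x), show box m φ (t, x) = -dt (dt φ) (t, x)
      + ∑ i, dx i (dx i φ) (t, x) - m ^ 2 * φ (t, x) from rfl]
  rw [dt_boost i hφ, boost, hwave, dxs_slice i (hφ.differentiable (by norm_num) _),
    dxs_slice i ((contDiff_dt hφ (k := 1) le_rfl).differentiable one_ne_zero _)]
  ring

end BoostData

section Jet

variable {E F : Type*} [NormedAddCommGroup E] [NormedSpace ℝ E] [NormedAddCommGroup F]
  [NormedSpace ℝ F] {s : ℕ}

/-- The size of the `s`-jet of `f` at `x`: the sum of the operator norms of the derivatives of `f`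
of order at most `s`. It is the pointwise counterpart of the Sobolev norm `HnormSq s f`. -/
def jetNorm (s : ℕ) (f : E → F) (x : E) : ℝ :=
  ∑ j ∈ Finset.range (s + 1), ‖iteratedFDeriv ℝ j f x‖

theorem jetNorm_nonneg (s : ℕ) (f : E → F) (x : E) : 0 ≤ jetNorm s f x :=
  Finset.sum_nonneg fun _ _ => norm_nonneg _

theorem jetNorm_mono {r s : ℕ} (h : r ≤ s) (f : E → F) (x : E) : jetNorm r f x ≤ jetNorm s f x :=
  Finset.sum_le_sum_of_subset_of_nonneg (by simpa using h) fun _ _ _ => norm_nonneg _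

theorem norm_iteratedFDeriv_le_jetNorm {j : ℕ} (h : j ≤ s) (f : E → F) (x : E) :
    ‖iteratedFDeriv ℝ j f x‖ ≤ jetNorm s f x :=
  Finset.single_le_sum (f := fun j => ‖iteratedFDeriv ℝ j f x‖) (fun _ _ => norm_nonneg _)
    (Finset.mem_range_succ_iff.2 h)

theorem norm_le_jetNorm (s : ℕ) (f : E → F) (x : E) : ‖f x‖ ≤ jetNorm s f x := by
  simpa using norm_iteratedFDeriv_le_jetNorm (Nat.zero_le s) f x

theorem jetNorm_eq_zero_of_notMem_tsupport {f : E → F} {x : E} (hx : x ∉ tsupport f) :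
    jetNorm s f x = 0 :=
  Finset.sum_eq_zero fun j _ => norm_eq_zero.2 <| Function.notMem_support.1 fun h =>
    hx (support_iteratedFDeriv_subset j h)

theorem jetNorm_sq_le (s : ℕ) (f : E → F) (x : E) :
    jetNorm s f x ^ 2 ≤ (s + 1) * ∑ j ∈ Finset.range (s + 1), ‖iteratedFDeriv ℝ j f x‖ ^ 2 := by
  simpa [jetNorm] using sq_sum_le_card_mul_sum_sq (s := Finset.range (s + 1))
    (f := fun j => ‖iteratedFDeriv ℝ j f x‖)

theorem jetNorm_add_le {f g : E → F} (hf : ContDiff ℝ s f) (hg : ContDiff ℝ s g) (x : E) :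
    jetNorm s (fun y => f y + g y) x ≤ jetNorm s f x + jetNorm s g x := by
  rw [jetNorm, jetNorm, jetNorm, ← Finset.sum_add_distrib]
  refine Finset.sum_le_sum fun j hj => ?_
  have hjs : (j : ℕ∞ω) ≤ s := by exact_mod_cast Finset.mem_range_succ_iff.1 hj
  rw [fun_iteratedFDeriv_add_apply (hf.of_le hjs).contDiffAt (hg.of_le hjs).contDiffAt]
  exact norm_add_le _ _

theorem jetNorm_const_smul {f : E → F} (hf : ContDiff ℝ s f) (c : ℝ) (x : E) :
    jetNorm s (fun y => c • f y) x = |c| * jetNorm s f x := by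
  rw [jetNorm, jetNorm, Finset.mul_sum]
  refine Finset.sum_congr rfl fun j hj => ?_
  have hjs : (j : ℕ∞ω) ≤ s := by exact_mod_cast Finset.mem_range_succ_iff.1 hj
  rw [iteratedFDeriv_const_smul_apply' (hf.of_le hjs).contDiffAt, norm_smul, Real.norm_eq_abs]

theorem jetNorm_sum_le {ι : Type*} (u : Finset ι) {f : ι → E → F}
    (hf : ∀ i, ContDiff ℝ s (f i)) (x : E) :
    jetNorm s (fun y => ∑ i ∈ u, f i y) x ≤ ∑ i ∈ u, jetNorm s (f i) x := by
  classical
  induction u using Finset.induction_on with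
  | empty => simp [jetNorm]
  | insert a u ha ih =>
    simp only [Finset.sum_insert ha]
    exact (jetNorm_add_le (hf a) (ContDiff.sum fun i _ => hf i) x).trans (by gcongr)

theorem jetNorm_fderiv_apply_le {f : E → F} (hf : ContDiff ℝ (s + 1 : ℕ) f) (v x : E) :
    jetNorm s (fun y => fderiv ℝ f y v) x ≤ ‖v‖ * jetNorm (s + 1) f x := by
  have hterm (j) (hj : j ∈ Finset.range (s + 1)) :
      ‖iteratedFDeriv ℝ j (fun y => fderiv ℝ f y v) x‖ ≤ ‖v‖ * ‖iteratedFDeriv ℝ (j + 1) f x‖ := by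
    have hjs : (j : ℕ∞ω) + 1 ≤ (s + 1 : ℕ) := by exact_mod_cast Finset.mem_range.1 hj
    rw [← norm_iteratedFDeriv_fderiv]
    exact norm_iteratedFDeriv_clm_apply_const (hf.fderiv_right hjs).contDiffAt le_rfl
  rw [jetNorm, jetNorm, Finset.sum_range_succ' _ (s + 1), mul_add, Finset.mul_sum]
  exact (Finset.sum_le_sum hterm).trans (le_add_of_nonneg_right (by positivity))

theorem jetNorm_mul_le {h f : E → ℝ} (hh : ContDiff ℝ s h) (hf : ContDiff ℝ s f) {B : ℝ} {x : E}
    (hB : ∀ k ≤ s, ‖iteratedFDeriv ℝ k h x‖ ≤ B) :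
    jetNorm s (fun y => h y * f y) x ≤ (s + 1) * 2 ^ s * B * jetNorm s f x := by
  have hB₀ : 0 ≤ B := (norm_nonneg _).trans (hB 0 (Nat.zero_le s))
  have hleibniz (j) (hj : j ∈ Finset.range (s + 1)) :
      ‖iteratedFDeriv ℝ j (fun y => h y * f y) x‖ ≤ 2 ^ s * B * jetNorm s f x := by
    have hjs : j ≤ s := Finset.mem_range_succ_iff.1 hj
    have hj0 := jetNorm_nonneg s f x
    calc ‖iteratedFDeriv ℝ j (fun y => h y * f y) x‖
        ≤ ∑ k ∈ Finset.range (j + 1), (j.choose k : ℝ) * ‖iteratedFDeriv ℝ k h x‖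
            * ‖iteratedFDeriv ℝ (j - k) f x‖ :=
          norm_iteratedFDeriv_mul_le hh hf x (by exact_mod_cast hjs)
      _ ≤ ∑ k ∈ Finset.range (j + 1), (j.choose k : ℝ) * B * jetNorm s f x := by
          refine Finset.sum_le_sum fun k hk => ?_
          have hkj := Finset.mem_range_succ_iff.1 hk
          gcongr
          · exact hB k (hkj.trans hjs)
          · exact norm_iteratedFDeriv_le_jetNorm (by omega) f x
      _ = 2 ^ j * B * jetNorm s f x := by
          rw [← Finset.sum_mul, ← Finset.sum_mul]
          have hchoose : ∑ k ∈ Finset.range (j + 1), (j.choose k : ℝ) = 2 ^ j := by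
            exact_mod_cast Nat.sum_range_choose j
          rw [hchoose]
      _ ≤ 2 ^ s * B * jetNorm s f x := by
          gcongr
          norm_num
  refine (Finset.sum_le_sum hleibniz).trans_eq ?_
  rw [Finset.sum_const, Finset.card_range, nsmul_eq_mul]
  push_cast
  ring

theorem norm_iteratedFDeriv_clm_le {L : E →L[ℝ] F} (hL : ‖L‖ ≤ 1) (k : ℕ) (x : E) :
    ‖iteratedFDeriv ℝ k L x‖ ≤ 1 + ‖x‖ := by
  rcases k with _ | _ | k
  · have := L.le_of_opNorm_le hL x
    simp only [norm_iteratedFDeriv_zero]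
    linarith
  · rw [← norm_iteratedFDeriv_fderiv, norm_iteratedFDeriv_zero, L.fderiv]
    linarith [norm_nonneg x]
  · have hconst : fderiv ℝ L = fun _ => L := funext fun _ => L.fderiv
    rw [← norm_iteratedFDeriv_fderiv, hconst, iteratedFDeriv_succ_const]
    simp only [Pi.zero_apply, norm_zero]
    positivity

theorem jetNorm_coord_mul_le {d : ℕ} (i : Fin d) {f : Spc d → ℝ} (hf : ContDiff ℝ s f)
    (x : Spc d) :
    jetNorm s (fun y => y i * f y) x ≤ (s + 1) * 2 ^ s * (1 + ‖x‖) * jetNorm s f x := by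
  have hproj : ‖(EuclideanSpace.proj i : Spc d →L[ℝ] ℝ)‖ ≤ 1 :=
    ContinuousLinearMap.opNorm_le_bound _ zero_le_one fun y => by
      simpa using PiLp.norm_apply_le y i
  exact jetNorm_mul_le (EuclideanSpace.proj (𝕜 := ℝ) i).contDiff hf fun k _ =>
    norm_iteratedFDeriv_clm_le hproj k x

end Jet

section DataJet

variable {d s N : ℕ} {φ : ℝ × Spc d → ℝ} {m t₀ : ℝ}

/-- The pointwise size at `x` of the Cauchy data `(φ, ∂ₜφ)` on the slice `t = t₀`, with one more
derivative on `φ`: the pointwise counterpart of `‖φ(t₀)‖_{H^{s+1}} + ‖∂ₜφ(t₀)‖_{H^s}`. -/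
def dataJet (s : ℕ) (t₀ : ℝ) (φ : ℝ × Spc d → ℝ) (x : Spc d) : ℝ :=
  jetNorm (s + 1) (fun y => φ (t₀, y)) x + jetNorm s (fun y => dt φ (t₀, y)) x

/-- The factor lost, besides the weight `1 + ‖x‖`, by one boost in `dataJet`: the Leibniz rule for
the weight `xⁱ` costs `(N + 2) 2 ^ (N + 1)`, the equation `∂ₜ²φ = Δφ - m²φ` costs `d + m²`. -/
def boostConst (d N : ℕ) (m t₀ : ℝ) : ℝ :=
  (N + 2) * 2 ^ (N + 1) * (d + 1 + m ^ 2) + |t₀| + 1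

theorem one_le_boostConst (d N : ℕ) (m t₀ : ℝ) : 1 ≤ boostConst d N m t₀ :=
  le_add_of_nonneg_left (by positivity)

theorem boostConst_mono {m m₀ : ℝ} (h : m ^ 2 ≤ m₀ ^ 2) (d N : ℕ) (t₀ : ℝ) :
    boostConst d N m t₀ ≤ boostConst d N m₀ t₀ := by
  unfold boostConst
  gcongr

theorem dataJet_nonneg (s : ℕ) (t₀ : ℝ) (φ : ℝ × Spc d → ℝ) (x : Spc d) : 0 ≤ dataJet s t₀ φ x :=
  add_nonneg (jetNorm_nonneg _ _ _) (jetNorm_nonneg _ _ _)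

theorem dataJet_eq_zero {K : Set (Spc d)} (hφ : tsupport (fun y => φ (t₀, y)) ⊆ K)
    (hdt : tsupport (fun y => dt φ (t₀, y)) ⊆ K) {x : Spc d} (hx : x ∉ K) :
    dataJet s t₀ φ x = 0 := by
  rw [dataJet, jetNorm_eq_zero_of_notMem_tsupport fun h => hx (hφ h),
    jetNorm_eq_zero_of_notMem_tsupport fun h => hx (hdt h), add_zero]

theorem contDiff_slice {F : ℝ × Spc d → ℝ} {n : ℕ∞ω} (hF : ContDiff ℝ n F) (t : ℝ) :
    ContDiff ℝ n fun y => F (t, y) :=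
  hF.comp (contDiff_const.prodMk contDiff_id)

theorem jetNorm_dxs_le {f : Spc d → ℝ} (hf : ContDiff ℝ (s + 1 : ℕ) f) (i : Fin d) (x : Spc d) :
    jetNorm s (dxs i f) x ≤ jetNorm (s + 1) f x := by
  have h := jetNorm_fderiv_apply_le hf (EuclideanSpace.single i 1) x
  rwa [PiLp.norm_single, norm_one, one_mul] at h

theorem contDiff_dxs {f : Spc d → ℝ} (hf : ContDiff ℝ (s + 1 : ℕ) f) (i : Fin d) :
    ContDiff ℝ s (dxs i f) :=
  contDiff_fderiv_apply_const hf le_rfl _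

theorem contDiff_lap {f : Spc d → ℝ} (hf : ContDiff ℝ (s + 2 : ℕ) f) : ContDiff ℝ s (lap f) :=
  ContDiff.sum fun i _ => contDiff_dxs (contDiff_dxs hf i) i

theorem jetNorm_lap_le {f : Spc d → ℝ} (hf : ContDiff ℝ (s + 2 : ℕ) f) (x : Spc d) :
    jetNorm s (lap f) x ≤ d * jetNorm (s + 2) f x :=
  calc jetNorm s (lap f) x ≤ ∑ i, jetNorm s (dxs i (dxs i f)) x :=
        jetNorm_sum_le _ (fun i => contDiff_dxs (contDiff_dxs hf i) i) x
    _ ≤ ∑ _i : Fin d, jetNorm (s + 2) f x := Finset.sum_le_sum fun i _ =>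
        (jetNorm_dxs_le (contDiff_dxs hf i) i x).trans (jetNorm_dxs_le hf i x)
    _ = d * jetNorm (s + 2) f x := by simp

theorem jetNorm_boost_slice_le (i : Fin d) (hφ : ContDiff ℝ (s + 1 : ℕ) φ) (x : Spc d) :
    jetNorm s (fun y => boost i φ (t₀, y)) x
      ≤ (s + 1) * 2 ^ s * (1 + ‖x‖) * jetNorm s (fun y => dt φ (t₀, y)) x
        + |t₀| * jetNorm (s + 1) (fun y => φ (t₀, y)) x := by
  have hf : ContDiff ℝ (s + 1 : ℕ) fun y => φ (t₀, y) := contDiff_slice hφ t₀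
  have hg : ContDiff ℝ s fun y => dt φ (t₀, y) := contDiff_slice (contDiff_dt hφ le_rfl) t₀
  have hdf : ContDiff ℝ s fun y => t₀ • dxs i (fun y => φ (t₀, y)) y :=
    (contDiff_dxs hf i).const_smul t₀
  have hboost : (fun y => boost i φ (t₀, y))
      = fun y => y i * dt φ (t₀, y) + t₀ • dxs i (fun y => φ (t₀, y)) y :=
    funext fun y => boost_slice i (hφ.differentiable (by simp) _)
  have hxg : ContDiff ℝ s fun y : Spc d => y i * dt φ (t₀, y) :=
    (EuclideanSpace.proj (𝕜 := ℝ) i).contDiff.mul hg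
  rw [hboost]
  refine (jetNorm_add_le hxg hdf x).trans ?_
  rw [jetNorm_const_smul (contDiff_dxs hf i)]
  gcongr
  · exact jetNorm_coord_mul_le i hg x
  · exact jetNorm_dxs_le hf i x

theorem jetNorm_dt_boost_slice_le (i : Fin d) (hφ : ContDiff ℝ (s + 2 : ℕ) φ)
    (hbox : ∀ p, box m φ p = 0) (x : Spc d) :
    jetNorm s (fun y => dt (boost i φ) (t₀, y)) x
      ≤ ((s + 1) * 2 ^ s * (1 + ‖x‖) * (d + m ^ 2) + 1) * jetNorm (s + 2) (fun y => φ (t₀, y)) x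
        + |t₀| * jetNorm (s + 1) (fun y => dt φ (t₀, y)) x := by
  set f : Spc d → ℝ := fun y => φ (t₀, y)
  set g : Spc d → ℝ := fun y => dt φ (t₀, y)
  have hf : ContDiff ℝ (s + 2 : ℕ) f := contDiff_slice hφ t₀
  have hg : ContDiff ℝ (s + 1 : ℕ) g := contDiff_slice (contDiff_dt hφ le_rfl) t₀
  have hfs : ContDiff ℝ s f := hf.of_le (by simp)
  have hdf : ContDiff ℝ s (dxs i f) := (contDiff_dxs hf i).of_le (by simp)
  have hdg : ContDiff ℝ s fun y => t₀ • dxs i g y := (contDiff_dxs hg i).const_smul t₀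
  have hwave : ContDiff ℝ s fun y => lap f y + (-m ^ 2) • f y :=
    (contDiff_lap hf).add (hfs.const_smul _)
  have hxwave : ContDiff ℝ s fun y : Spc d => y i * (lap f y + (-m ^ 2) • f y) :=
    (EuclideanSpace.proj (𝕜 := ℝ) i).contDiff.mul hwave
  have hboost : (fun y => dt (boost i φ) (t₀, y))
      = fun y => y i * (lap f y + (-m ^ 2) • f y) + (dxs i f y + t₀ • dxs i g y) := by
    funext y
    rw [dt_boost_slice i (hφ.of_le (by exact_mod_cast le_add_self)) hbox, smul_eq_mul, smul_eq_mul]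
    ring
  have hwave_le : jetNorm s (fun y => lap f y + (-m ^ 2) • f y) x
      ≤ (d + m ^ 2) * jetNorm (s + 2) f x := by
    refine (jetNorm_add_le (contDiff_lap hf) (hfs.const_smul _) x).trans ?_
    rw [jetNorm_const_smul hfs, abs_neg, abs_sq, add_mul]
    gcongr
    · exact jetNorm_lap_le hf x
    · exact jetNorm_mono (by omega) f x
  calc jetNorm s (fun y => dt (boost i φ) (t₀, y)) x
      ≤ jetNorm s (fun y => y i * (lap f y + (-m ^ 2) • f y)) x
          + (jetNorm s (dxs i f) x + jetNorm s (fun y => t₀ • dxs i g y) x) := by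
        rw [hboost]
        exact (jetNorm_add_le hxwave (hdf.add hdg) x).trans (by grw [jetNorm_add_le hdf hdg x])
    _ ≤ (s + 1) * 2 ^ s * (1 + ‖x‖) * ((d + m ^ 2) * jetNorm (s + 2) f x)
          + (jetNorm (s + 2) f x + |t₀| * jetNorm (s + 1) g x) := by
        rw [jetNorm_const_smul (contDiff_dxs hg i)]
        gcongr
        · exact (jetNorm_coord_mul_le i hwave x).trans (by gcongr)
        · exact (jetNorm_mono (Nat.le_succ s) _ x).trans (jetNorm_dxs_le hf i x)
        · exact jetNorm_dxs_le hg i x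
    _ = _ := by ring

theorem dataJet_boost_le (hs : s ≤ N) (i : Fin d) (hφ : ContDiff ℝ (s + 2 : ℕ) φ)
    (hbox : ∀ p, box m φ p = 0) (x : Spc d) :
    dataJet s t₀ (boost i φ) x
      ≤ boostConst d N m t₀ * (1 + ‖x‖) * dataJet (s + 1) t₀ φ x := by
  have ha := jetNorm_nonneg (s + 2) (fun y => φ (t₀, y)) x
  have hb := jetNorm_nonneg (s + 1) (fun y => dt φ (t₀, y)) x
  have h₀ := jetNorm_boost_slice_le (s := s + 1) (t₀ := t₀) i hφ x
  have h₁ := jetNorm_dt_boost_slice_le (t₀ := t₀) i hφ hbox x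
  unfold dataJet boostConst
  set a := jetNorm (s + 2) (fun y => φ (t₀, y)) x
  set b := jetNorm (s + 1) (fun y => dt φ (t₀, y)) x
  have hA₀ : ((s + 1 : ℕ) + 1 : ℝ) * 2 ^ (s + 1) ≤ (N + 2) * 2 ^ (N + 1) := by
    push_cast
    rw [add_assoc, one_add_one_eq_two]
    gcongr
    norm_num
  have hA₁ : (s + 1 : ℝ) * 2 ^ s ≤ (N + 2) * 2 ^ (N + 1) := by
    gcongr
    · norm_num
    · norm_num
    · omega
  set A : ℝ := (N + 2) * 2 ^ (N + 1)
  set w := 1 + ‖x‖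
  have hw : 1 ≤ w := le_add_of_nonneg_right (norm_nonneg x)
  calc _ ≤ A * w * b + |t₀| * a + ((A * w * (d + m ^ 2) + 1) * a + |t₀| * b) := by
        refine add_le_add (h₀.trans ?_) (h₁.trans ?_) <;> gcongr
    _ ≤ A * w * b + |t₀| * a + ((A * w * (d + m ^ 2) + 1) * a + |t₀| * b)
        + (A * w * (a + (d + m ^ 2) * b) + (w - 1) * ((|t₀| + 1) * (a + b)) + b) := by
        have := sub_nonneg.2 hw
        exact le_add_of_nonneg_right (by positivity)
    _ = (A * (d + 1 + m ^ 2) + |t₀| + 1) * w * (a + b) := by ring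

theorem dataJet_boostList_le (l : List (Fin d)) (hN : s + l.length ≤ N)
    (hφ : ContDiff ℝ (s + l.length + 1 : ℕ) φ) (hbox : ∀ p, box m φ p = 0) (x : Spc d) :
    dataJet s t₀ (boostList l φ) x
      ≤ (boostConst d N m t₀ * (1 + ‖x‖)) ^ l.length * dataJet (s + l.length) t₀ φ x := by
  induction l generalizing s with
  | nil => simp [boostList]
  | cons i l ih =>
    rw [List.length_cons] at hN hφ ⊢
    have hc : 0 ≤ boostConst d N m t₀ := zero_le_one.trans (one_le_boostConst d N m t₀)
    have hψ : ContDiff ℝ (s + 2 : ℕ) (boostList l φ) :=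
      contDiff_boostList l (hφ.of_le (by exact_mod_cast (by omega)))
    have hψ_box := box_boostList l (hφ.of_le (by exact_mod_cast (by omega))) hbox
    have hind := ih (s := s + 1) (by omega) (hφ.of_le (by exact_mod_cast (by omega)))
    calc dataJet s t₀ (boost i (boostList l φ)) x
        ≤ boostConst d N m t₀ * (1 + ‖x‖) * dataJet (s + 1) t₀ (boostList l φ) x :=
          dataJet_boost_le (by omega) i hψ hψ_box x
      _ ≤ boostConst d N m t₀ * (1 + ‖x‖) * ((boostConst d N m t₀ * (1 + ‖x‖)) ^ l.length
            * dataJet (s + 1 + l.length) t₀ φ x) := by gcongr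
      _ = _ := by rw [pow_succ', mul_assoc _ (_ ^ _), add_assoc s 1, add_comm 1 l.length]

end DataJet

section GraphFlux

variable {d : ℕ} {J₀ : ℝ × Spc d → ℝ} {J : Fin d → ℝ × Spc d → ℝ} {u v : Spc d → ℝ}

/-- The divergence of the spacetime current with time component `J₀` and space components `J i`. -/
def spacetimeDiv (J₀ : ℝ × Spc d → ℝ) (J : Fin d → ℝ × Spc d → ℝ) (p : ℝ × Spc d) : ℝ :=
  dt J₀ p + ∑ i, dx i (J i) p

/-- The flux density, with respect to `dx`, of the current `(J₀, J)` through the graph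
`{t = u x}`, whose upward conormal is `dt - du`. -/
def graphFlux (J₀ : ℝ × Spc d → ℝ) (J : Fin d → ℝ × Spc d → ℝ) (u : Spc d → ℝ) (x : Spc d) : ℝ :=
  J₀ (u x, x) - ∑ i, dxs i u x * J i (u x, x)

/-- The affine homotopy from the graph of `u` (at `p.1 = 0`) to the graph of `v` (at `p.1 = 1`). -/
def graphHomotopy (u v : Spc d → ℝ) (p : ℝ × Spc d) : ℝ × Spc d :=
  (u p.2 + p.1 * (v p.2 - u p.2), p.2)

theorem graphHomotopy_zero (u v : Spc d → ℝ) (x : Spc d) : graphHomotopy u v (0, x) = (u x, x) := by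
  simp [graphHomotopy]

theorem graphHomotopy_one (u v : Spc d → ℝ) (x : Spc d) : graphHomotopy u v (1, x) = (v x, x) := by
  simp [graphHomotopy]

theorem contDiff_graphHomotopy {n : ℕ∞ω} (hu : ContDiff ℝ n u) (hv : ContDiff ℝ n v) :
    ContDiff ℝ n (graphHomotopy u v) := by
  unfold graphHomotopy
  fun_prop

theorem continuous_dxs {f : Spc d → ℝ} (hf : ContDiff ℝ 1 f) (i : Fin d) : Continuous (dxs i f) :=
  (contDiff_fderiv_apply_const (k := 0) hf (by simp) _).continuous

theorem continuous_dx_time {F : ℝ × Spc d → ℝ} (hF : ContDiff ℝ 1 F) (i : Fin d) (x : Spc d) :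
    Continuous fun s => dx i F (s, x) :=
  (contDiff_dx (k := 0) i hF (by simp)).continuous.comp (Continuous.prodMk_left x)

theorem continuous_graphFlux (hJ₀ : Continuous J₀) (hJ : ∀ i, Continuous (J i))
    (hu : ContDiff ℝ 1 u) : Continuous (graphFlux J₀ J u) := by
  have hgraph : Continuous fun x => (u x, x) := hu.continuous.prodMk continuous_id
  exact (hJ₀.comp hgraph).sub
    (continuous_finsetSum _ fun i _ => (continuous_dxs hu i).mul ((hJ i).comp hgraph))

theorem integral_dxs_eq_zero {f : Spc d → ℝ} (hf : ContDiff ℝ 1 f) (hc : HasCompactSupport f)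
    (i : Fin d) : ∫ x, dxs i f x = 0 := by
  have hf' : Integrable fun x => fderiv ℝ f x (EuclideanSpace.single i 1) :=
    (continuous_dxs hf i).integrable_of_hasCompactSupport (hc.fderiv_apply ℝ _)
  have h := integral_mul_fderiv_eq_neg_fderiv_mul_of_integrable (μ := (volume : Measure (Spc d)))
    (f := fun _ : Spc d => (1 : ℝ)) (g := f) (v := EuclideanSpace.single i 1) (by simp)
    (by simpa using hf') (by simpa using hf.continuous.integrable_of_hasCompactSupport hc)
    (fun _ _ => differentiableAt_const _) (fun x _ => hf.differentiable one_ne_zero x)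
  simpa [dxs] using h

theorem hasDerivAt_comp_graphHomotopy {F : ℝ × Spc d → ℝ} {s : ℝ} {x : Spc d}
    (hF : DifferentiableAt ℝ F (graphHomotopy u v (s, x))) :
    HasDerivAt (fun r => F (graphHomotopy u v (r, x)))
      ((v x - u x) * dt F (graphHomotopy u v (s, x))) s := by
  have hw : HasDerivAt (fun r => u x + r * (v x - u x)) (v x - u x) s := by
    simpa using ((hasDerivAt_id s).mul_const (v x - u x)).const_add (u x)
  rw [mul_comm]
  exact HasDerivAt.comp s (hasDerivAt_time hF) hw

/-- The flux density of the current component `F` through the side of the moving column swept by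
the homotopy from `u` to `v`. -/
def sweptFlux (u v : Spc d → ℝ) (F : ℝ × Spc d → ℝ) (p : ℝ × Spc d) : ℝ :=
  (v p.2 - u p.2) * F (graphHomotopy u v p)

theorem contDiff_sweptFlux {n : ℕ∞ω} {F : ℝ × Spc d → ℝ} (hF : ContDiff ℝ n F)
    (hu : ContDiff ℝ n u) (hv : ContDiff ℝ n v) : ContDiff ℝ n (sweptFlux u v F) :=
  ((hv.comp contDiff_snd).sub (hu.comp contDiff_snd)).mul
    (hF.comp (contDiff_graphHomotopy hu hv))

theorem dxs_affine_interpolation {x : Spc d} (hu : DifferentiableAt ℝ u x)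
    (hv : DifferentiableAt ℝ v x) (i : Fin d) (s : ℝ) :
    dxs i (fun y => u y + s * (v y - u y)) x = dxs i u x + s * (dxs i v x - dxs i u x) := by
  rw [dxs, fderiv_fun_add hu ((hv.fun_sub hu).const_mul s), fderiv_const_mul (hv.fun_sub hu),
    fderiv_fun_sub hv hu]
  rfl

theorem dx_sweptFlux {F : ℝ × Spc d → ℝ} (hF : ContDiff ℝ 1 F) (hu : ContDiff ℝ 1 u)
    (hv : ContDiff ℝ 1 v) (i : Fin d) (s : ℝ) (x : Spc d) :
    dx i (sweptFlux u v F) (s, x)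
      = (dxs i v x - dxs i u x) * F (graphHomotopy u v (s, x))
        + (v x - u x) * ((dxs i u x + s * (dxs i v x - dxs i u x))
            * dt F (graphHomotopy u v (s, x)) + dx i F (graphHomotopy u v (s, x))) := by
  have hux := hu.differentiable one_ne_zero x
  have hvx := hv.differentiable one_ne_zero x
  have hw : DifferentiableAt ℝ (fun y => u y + s * (v y - u y)) x :=
    hux.add ((hvx.sub hux).const_mul s)
  have hFw := hF.differentiable one_ne_zero (u x + s * (v x - u x), x)
  have hcomp : DifferentiableAt ℝ (fun y => F (u y + s * (v y - u y), y)) x :=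
    DifferentiableAt.comp (f := fun y => (u y + s * (v y - u y), y)) x hFw
      (hw.prodMk differentiableAt_id)
  calc dx i (sweptFlux u v F) (s, x)
      = dxs i (fun y => (v y - u y) * F (u y + s * (v y - u y), y)) x :=
        (dxs_slice i ((contDiff_sweptFlux hF hu hv).differentiable one_ne_zero _)).symm
    _ = dxs i (fun y => v y - u y) x * F (graphHomotopy u v (s, x))
          + (v x - u x) * dxs i (fun y => F (u y + s * (v y - u y), y)) x :=
        fderiv_mul_apply (hvx.fun_sub hux) hcomp _
    _ = _ := by
        rw [dxs_comp_graph i hFw hw, dxs_affine_interpolation hux hvx, dxs,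
          fderiv_fun_sub hvx hux]
        rfl

theorem hasDerivAt_graphFlux_interpolation (hJ₀ : ContDiff ℝ 1 J₀) (hJ : ∀ i, ContDiff ℝ 1 (J i))
    (hu : ContDiff ℝ 1 u) (hv : ContDiff ℝ 1 v) (s : ℝ) (x : Spc d) :
    HasDerivAt (fun r => graphFlux J₀ J (fun y => u y + r * (v y - u y)) x)
      ((v x - u x) * spacetimeDiv J₀ J (graphHomotopy u v (s, x))
        - ∑ i, dx i (sweptFlux u v (J i)) (s, x)) s := by
  have hux := hu.differentiable one_ne_zero x
  have hvx := hv.differentiable one_ne_zero x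
  have hslope (i) : HasDerivAt (fun r => dxs i (fun y => u y + r * (v y - u y)) x)
      (dxs i v x - dxs i u x) s := by
    simp only [dxs_affine_interpolation hux hvx]
    simpa using ((hasDerivAt_id s).mul_const (dxs i v x - dxs i u x)).const_add (dxs i u x)
  have hcomp {F} (hF : ContDiff ℝ 1 F) : HasDerivAt (fun r => F (graphHomotopy u v (r, x)))
      ((v x - u x) * dt F (graphHomotopy u v (s, x))) s :=
    hasDerivAt_comp_graphHomotopy (hF.differentiable one_ne_zero _)
  refine ((hcomp hJ₀).fun_sub (HasDerivAt.fun_sum (u := Finset.univ) fun i _ =>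
    (hslope i).fun_mul (hcomp (hJ i)))).congr_deriv ?_
  simp only [dx_sweptFlux (hJ _) hu hv, dxs_affine_interpolation hux hvx, spacetimeDiv, mul_add,
    Finset.mul_sum, Finset.sum_add_distrib]
  rw [add_sub_assoc, sub_eq_add_neg]
  congr 1
  rw [← add_assoc]
  simp only [← Finset.sum_add_distrib, ← Finset.sum_sub_distrib, ← Finset.sum_neg_distrib]
  exact Finset.sum_congr rfl fun i _ => by ring

theorem graphFlux_sub_le (hJ₀ : ContDiff ℝ 1 J₀) (hJ : ∀ i, ContDiff ℝ 1 (J i))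
    (hu : ContDiff ℝ 1 u) (hv : ContDiff ℝ 1 v) {x : Spc d}
    (hdiv : ∀ s ∈ Set.Icc (0 : ℝ) 1,
      (v x - u x) * spacetimeDiv J₀ J (graphHomotopy u v (s, x)) ≤ 0) :
    graphFlux J₀ J v x - graphFlux J₀ J u x
      ≤ ∫ s in 0..1, -∑ i, dx i (sweptFlux u v (J i)) (s, x) := by
  have hderiv := hasDerivAt_graphFlux_interpolation (x := x) hJ₀ hJ hu hv
  have hcont : Continuous fun s : ℝ => -∑ i, dx i (sweptFlux u v (J i)) (s, x) :=
    (continuous_finsetSum _ fun i _ =>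
      continuous_dx_time (contDiff_sweptFlux (hJ i) hu hv) i x).neg
  have hFTC := intervalIntegral.sub_le_integral_of_hasDeriv_right_of_le zero_le_one
    (fun s _ => (hderiv s).continuousAt.continuousWithinAt) (fun s _ => (hderiv s).hasDerivWithinAt)
    hcont.integrableOn_Icc fun s hs => by linarith [hdiv s (Set.Ioo_subset_Icc_self hs)]
  simpa using hFTC

theorem integral_intervalIntegral_dx_eq_zero {V : ℝ × Spc d → ℝ} (hV : ContDiff ℝ 1 V)
    {K : Set (Spc d)} (hK : IsCompact K) (hzero : ∀ s ∈ Set.Icc (0 : ℝ) 1, ∀ x ∉ K, V (s, x) = 0)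
    (i : Fin d) :
    Integrable (fun x => ∫ s in (0 : ℝ)..1, dx i V (s, x))
      ∧ ∫ x, ∫ s in (0 : ℝ)..1, dx i V (s, x) = 0 := by
  have hcont : Continuous (dx i V) := (contDiff_dx (k := 0) i hV (by simp)).continuous
  have hoff : ∀ s ∈ Set.Icc (0 : ℝ) 1, ∀ x ∉ K, dx i V (s, x) = 0 := fun s hs x hx => by
    have h0 : (fun y => V (s, y)) =ᶠ[𝓝 x] fun _ => 0 :=
      eventually_of_mem (hK.isClosed.isOpen_compl.mem_nhds hx) (hzero s hs)
    rw [← dxs_slice i (hV.differentiable one_ne_zero _), dxs, h0.fderiv_eq]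
    simp
  have hint : Integrable (Function.uncurry fun s x => dx i V (s, x))
      ((volume.restrict (Set.uIoc 0 1)).prod volume) := by
    rw [Set.uIoc_of_le zero_le_one, ← Measure.restrict_univ (μ := (volume : Measure (Spc d))),
      Measure.prod_restrict]
    refine IntegrableOn.of_forall_sdiff_eq_zero (s := Set.Icc 0 1 ×ˢ K)
      (hcont.continuousOn.integrableOn_compact (isCompact_Icc.prod hK))
      (measurableSet_Ioc.prod .univ) fun p ⟨⟨hp, _⟩, hpK⟩ => ?_
    have hp' := Set.Ioc_subset_Icc_self hp
    exact hoff p.1 hp' p.2 fun h => hpK ⟨hp', h⟩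
  refine ⟨by simpa [intervalIntegral.integral_of_le] using hint.integral_prod_right, ?_⟩
  rw [← intervalIntegral_integral_swap hint]
  refine (intervalIntegral.integral_congr fun s hs => ?_).trans intervalIntegral.integral_zero
  rw [Set.uIcc_of_le zero_le_one] at hs
  have hslice : ContDiff ℝ 1 fun x => V (s, x) := hV.comp (contDiff_prodMk_right s)
  simp only [← dxs_slice i (hV.differentiable one_ne_zero _)]
  exact integral_dxs_eq_zero hslice (HasCompactSupport.intro hK (hzero s hs)) i

theorem integrable_graphFlux {K : Set (Spc d)} (hJ₀ : Continuous J₀) (hJ : ∀ i, Continuous (J i))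
    (hu : ContDiff ℝ 1 u) (hK : IsCompact K) (hJ₀K : ∀ x ∉ K, J₀ (u x, x) = 0)
    (hJK : ∀ i, ∀ x ∉ K, J i (u x, x) = 0) : Integrable (graphFlux J₀ J u) := by
  refine (continuous_graphFlux hJ₀ hJ hu).integrable_of_hasCompactSupport
    (HasCompactSupport.intro hK fun x hx => ?_)
  simp [graphFlux, hJ₀K x hx, fun i => hJK i x hx]

theorem integral_graphFlux_le {K : Set (Spc d)} (hJ₀ : ContDiff ℝ 1 J₀)
    (hJ : ∀ i, ContDiff ℝ 1 (J i)) (hu : ContDiff ℝ 1 u) (hv : ContDiff ℝ 1 v) (hK : IsCompact K)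
    (hJ₀K : ∀ s ∈ Set.Icc (0 : ℝ) 1, ∀ x ∉ K, J₀ (graphHomotopy u v (s, x)) = 0)
    (hJK : ∀ i, ∀ s ∈ Set.Icc (0 : ℝ) 1, ∀ x ∉ K, J i (graphHomotopy u v (s, x)) = 0)
    (hdiv : ∀ s ∈ Set.Icc (0 : ℝ) 1, ∀ x,
      (v x - u x) * spacetimeDiv J₀ J (graphHomotopy u v (s, x)) ≤ 0) :
    ∫ x, graphFlux J₀ J v x ≤ ∫ x, graphFlux J₀ J u x := by
  have hint {w : Spc d → ℝ} (hw : ContDiff ℝ 1 w) {s : ℝ} (hs : s ∈ Set.Icc (0 : ℝ) 1)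
      (hws : ∀ x, graphHomotopy u v (s, x) = (w x, x)) : Integrable (graphFlux J₀ J w) :=
    integrable_graphFlux hJ₀.continuous (fun i => (hJ i).continuous) hw hK
      (fun x hx => hws x ▸ hJ₀K s hs x hx) fun i x hx => hws x ▸ hJK i s hs x hx
  have hu' := hint hu (s := 0) (by simp) (graphHomotopy_zero u v)
  have hv' := hint hv (s := 1) (by simp) (graphHomotopy_one u v)
  have hside (i) := integral_intervalIntegral_dx_eq_zero (contDiff_sweptFlux (hJ i) hu hv) hK
    (fun s hs x hx => mul_eq_zero_of_right _ (hJK i s hs x hx)) i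
  have hsum (x) : ∫ s in 0..1, -∑ i, dx i (sweptFlux u v (J i)) (s, x)
      = -∑ i, ∫ s in 0..1, dx i (sweptFlux u v (J i)) (s, x) := by
    rw [intervalIntegral.integral_neg, intervalIntegral.integral_finsetSum fun i _ =>
      (continuous_dx_time (contDiff_sweptFlux (hJ i) hu hv) i x).intervalIntegrable _ _]
  refine sub_nonpos.1 ?_
  calc (∫ x, graphFlux J₀ J v x) - ∫ x, graphFlux J₀ J u x
      = ∫ x, (graphFlux J₀ J v x - graphFlux J₀ J u x) := (integral_sub hv' hu').symm
    _ ≤ ∫ x, -∑ i, ∫ s in 0..1, dx i (sweptFlux u v (J i)) (s, x) :=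
        integral_mono (hv'.sub hu') (integrable_finsetSum _ fun i _ => (hside i).1).neg fun x =>
          (graphFlux_sub_le hJ₀ hJ hu hv fun s hs => hdiv s hs x).trans_eq (hsum x)
    _ = 0 := by
        rw [integral_neg, integral_finsetSum _ fun i _ => (hside i).1]
        simp [fun i => (hside i).2]

end GraphFlux

section Energy

variable {d : ℕ} {m : ℝ} {ψ : ℝ × Spc d → ℝ} {h : Spc d → ℝ}

/-- Twice the energy density of the Klein–Gordon field `ψ`: the time component of its
energy current. -/
def energyDensity (m : ℝ) (ψ : ℝ × Spc d → ℝ) (p : ℝ × Spc d) : ℝ :=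
  dt ψ p ^ 2 + ∑ i, dx i ψ p ^ 2 + m ^ 2 * ψ p ^ 2

/-- The space components of the energy current whose time component is `energyDensity`. -/
def energyCurrent (ψ : ℝ × Spc d → ℝ) (i : Fin d) (p : ℝ × Spc d) : ℝ :=
  -2 * (dt ψ p * dx i ψ p)

/-- The flux density of the energy current through the graph `{t = u x}`. -/
def energyFlux (m : ℝ) (ψ : ℝ × Spc d → ℝ) (u : Spc d → ℝ) : Spc d → ℝ :=
  graphFlux (energyDensity m ψ) (energyCurrent ψ) u

theorem energyDensity_nonneg (m : ℝ) (ψ : ℝ × Spc d → ℝ) (p : ℝ × Spc d) :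
    0 ≤ energyDensity m ψ p := by
  unfold energyDensity
  positivity

theorem contDiff_energyDensity (hψ : ContDiff ℝ 2 ψ) : ContDiff ℝ 1 (energyDensity m ψ) :=
  (((contDiff_dt hψ le_rfl).pow 2).add
    (ContDiff.sum fun i _ => (contDiff_dx i hψ le_rfl).pow 2)).add
      (contDiff_const.mul ((hψ.of_le one_le_two).pow 2))

theorem contDiff_energyCurrent (hψ : ContDiff ℝ 2 ψ) (i : Fin d) :
    ContDiff ℝ 1 (energyCurrent ψ i) :=
  contDiff_const.mul ((contDiff_dt hψ le_rfl).mul (contDiff_dx i hψ le_rfl))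

theorem fderiv_energyDensity_apply (hψ : ContDiff ℝ 2 ψ) (p v : ℝ × Spc d) :
    fderiv ℝ (energyDensity m ψ) p v
      = 2 * (dt ψ p * fderiv ℝ (dt ψ) p v + ∑ i, dx i ψ p * fderiv ℝ (dx i ψ) p v
          + m ^ 2 * (ψ p * fderiv ℝ ψ p v)) := by
  have ht := (contDiff_dt hψ (k := 1) le_rfl).differentiable one_ne_zero p
  have hx (i) := (contDiff_dx i hψ (k := 1) le_rfl).differentiable one_ne_zero p
  have h0 := hψ.differentiable two_ne_zero p
  have h := (((ht.hasFDerivAt.pow 2).fun_add (HasFDerivAt.fun_sum (u := Finset.univ)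
    fun i _ => (hx i).hasFDerivAt.pow 2)).fun_add
      ((h0.hasFDerivAt.pow 2).const_mul (m ^ 2)))
  rw [show fderiv ℝ (energyDensity m ψ) p = _ from h.fderiv]
  simp [Finset.mul_sum, mul_add, mul_assoc, mul_left_comm]

theorem spacetimeDiv_energy (hψ : ContDiff ℝ 2 ψ) (p : ℝ × Spc d) :
    spacetimeDiv (energyDensity m ψ) (energyCurrent ψ) p = -2 * (dt ψ p * box m ψ p) := by
  have ht := (contDiff_dt hψ (k := 1) le_rfl).differentiable one_ne_zero p
  have hx (i) := (contDiff_dx i hψ (k := 1) le_rfl).differentiable one_ne_zero p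
  have hcurrent (i) : dx i (energyCurrent ψ i) p
      = -2 * (dt (dx i ψ) p * dx i ψ p + dt ψ p * dx i (dx i ψ) p) := by
    have hcomm : dx i (dt ψ) p = dt (dx i ψ) p := fderiv_fderiv_apply_comm hψ p _ _
    rw [dx, show energyCurrent ψ i = fun q => -2 * (dt ψ q * dx i ψ q) from rfl,
      fderiv_const_mul (ht.fun_mul (hx i)), smul_apply, fderiv_mul_apply ht (hx i), ← hcomm]
    rfl
  rw [spacetimeDiv, dt, fderiv_energyDensity_apply hψ, Finset.sum_congr rfl fun i _ => hcurrent i,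
    ← Finset.mul_sum, Finset.sum_add_distrib, ← Finset.mul_sum, box]
  simp only [mul_comm (dx _ ψ p), dt]
  ring

theorem abs_sum_mul_energyCurrent_le (m : ℝ) (ψ : ℝ × Spc d → ℝ) {a : Fin d → ℝ}
    (ha : ∑ i, a i ^ 2 ≤ 1) (p : ℝ × Spc d) :
    |∑ i, a i * energyCurrent ψ i p| ≤ energyDensity m ψ p := by
  have hsum : ∑ i, a i * energyCurrent ψ i p = -2 * (dt ψ p * ∑ i, a i * dx i ψ p) := by
    simp only [energyCurrent, Finset.mul_sum]
    exact Finset.sum_congr rfl fun i _ => by ring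
  have hCS : (∑ i, a i * dx i ψ p) ^ 2 ≤ ∑ i, dx i ψ p ^ 2 :=
    (Finset.sum_mul_sq_le_sq_mul_sq _ _ _).trans
      (mul_le_of_le_one_left (Finset.sum_nonneg fun _ _ => sq_nonneg _) ha)
  have hmass : 0 ≤ m ^ 2 * ψ p ^ 2 := by positivity
  rw [hsum, energyDensity, abs_le]
  constructor <;>
    nlinarith [sq_nonneg (dt ψ p - ∑ i, a i * dx i ψ p), sq_nonneg (dt ψ p + ∑ i, a i * dx i ψ p)]

theorem energyFlux_nonneg (m : ℝ) (ψ : ℝ × Spc d → ℝ) {x : Spc d}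
    (hslope : ∑ i, dxs i h x ^ 2 ≤ 1) : 0 ≤ energyFlux m ψ h x :=
  sub_nonneg.2 ((le_abs_self _).trans (abs_sum_mul_energyCurrent_le m ψ hslope _))

theorem continuous_energyFlux (hψ : ContDiff ℝ 2 ψ) (hh : ContDiff ℝ 1 h) :
    Continuous (energyFlux m ψ h) :=
  continuous_graphFlux (contDiff_energyDensity hψ).continuous
    (fun i => (contDiff_energyCurrent hψ i).continuous) hh

theorem energyFlux_const (m : ℝ) (ψ : ℝ × Spc d → ℝ) (t₀ : ℝ) (x : Spc d) :
    energyFlux m ψ (fun _ => t₀) x = energyDensity m ψ (t₀, x) := by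
  simp [energyFlux, graphFlux, dxs]

end Energy

section Cutoff

variable {d : ℕ} {m t₀ R : ℝ} {ψ : ℝ × Spc d → ℝ} {h : Spc d → ℝ}

theorem spacetimeDiv_mul {χ J₀ : ℝ × Spc d → ℝ} {J : Fin d → ℝ × Spc d → ℝ} {p : ℝ × Spc d}
    (hχ : DifferentiableAt ℝ χ p) (hJ₀ : DifferentiableAt ℝ J₀ p)
    (hJ : ∀ i, DifferentiableAt ℝ (J i) p) :
    spacetimeDiv (fun q => χ q * J₀ q) (fun i q => χ q * J i q) p
      = dt χ p * J₀ p + ∑ i, dx i χ p * J i p + χ p * spacetimeDiv J₀ J p := by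
  have hdx (i) : dx i (fun q => χ q * J i q) p = dx i χ p * J i p + χ p * dx i (J i) p :=
    fderiv_mul_apply hχ (hJ i) _
  have hdt : dt (fun q => χ q * J₀ q) p = dt χ p * J₀ p + χ p * dt J₀ p :=
    fderiv_mul_apply hχ hJ₀ _
  simp only [spacetimeDiv, hdx, hdt, Finset.sum_add_distrib, ← Finset.mul_sum]
  ring

theorem graphFlux_mul (χ J₀ : ℝ × Spc d → ℝ) (J : Fin d → ℝ × Spc d → ℝ) (u : Spc d → ℝ)
    (x : Spc d) :
    graphFlux (fun q => χ q * J₀ q) (fun i q => χ q * J i q) u x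
      = χ (u x, x) * graphFlux J₀ J u x := by
  simp only [graphFlux, mul_sub, Finset.mul_sum, mul_left_comm]

/-- A cutoff equal to `1` where `t + h x ≤ R - 1` and to `0` where `R ≤ t + h x`. Its level sets
`{t = c - h x}` are weakly spacelike when `h` is `1`-Lipschitz. -/
def coneCutoff (R : ℝ) (h : Spc d → ℝ) (p : ℝ × Spc d) : ℝ :=
  smoothTransition (R - p.1 - h p.2)

theorem contDiff_coneCutoff {n : ℕ∞} (hh : ContDiff ℝ n h) : ContDiff ℝ n (coneCutoff R h) :=
  smoothTransition.contDiff.comp ((contDiff_const.sub contDiff_fst).sub (hh.comp contDiff_snd))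

theorem fderiv_coneCutoff_apply {p : ℝ × Spc d} (hh : DifferentiableAt ℝ h p.2)
    (v : ℝ × Spc d) :
    fderiv ℝ (coneCutoff R h) p v
      = -(deriv smoothTransition (R - p.1 - h p.2) * (v.1 + fderiv ℝ h p.2 v.2)) := by
  have hS : DifferentiableAt ℝ smoothTransition (R - p.1 - h p.2) :=
    (smoothTransition.contDiff (n := 1)).differentiable one_ne_zero _
  have harg := ((hasFDerivAt_fst (𝕜 := ℝ) (p := p)).const_sub R).fun_sub
    (HasFDerivAt.comp p hh.hasFDerivAt hasFDerivAt_snd)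
  rw [show fderiv ℝ (coneCutoff R h) p = _ from (hS.hasDerivAt.comp_hasFDerivAt p harg).fderiv]
  simp only [smul_apply, sub_apply, neg_apply, ContinuousLinearMap.coe_fst',
    ContinuousLinearMap.comp_apply, ContinuousLinearMap.coe_snd', smul_eq_mul]
  ring

theorem deriv_smoothTransition_of_one_lt {y : ℝ} (hy : 1 < y) : deriv smoothTransition y = 0 := by
  have hone : smoothTransition =ᶠ[𝓝 y] fun _ => 1 :=
    (lt_mem_nhds hy).mono fun z hz => smoothTransition.one_of_one_le hz.le
  rw [hone.deriv_eq, deriv_const]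

theorem sub_mul_deriv_smoothTransition_nonneg (hR : 2 * t₀ + 1 ≤ R) {s b : ℝ} (hs : 0 ≤ s) :
    0 ≤ (b - t₀) * deriv smoothTransition (R - (t₀ + s * (b - t₀)) - b) := by
  rcases le_or_gt t₀ b with hb | hb
  · exact mul_nonneg (sub_nonneg.2 hb) smoothTransition.monotone.deriv_nonneg
  · rw [deriv_smoothTransition_of_one_lt (by nlinarith), mul_zero]

theorem exists_isCompact_coneCutoff_eq_zero (hcoer : Tendsto h (cocompact (Spc d)) atTop)
    (hR : 2 * t₀ + 1 ≤ R) :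
    ∃ K : Set (Spc d), IsCompact K ∧ ∀ s ∈ Set.Icc (0 : ℝ) 1, ∀ x ∉ K,
      coneCutoff R h (graphHomotopy (fun _ => t₀) h (s, x)) = 0 := by
  obtain ⟨K, hK, hKc⟩ := mem_cocompact.1 (hcoer.eventually_ge_atTop (R + |t₀|))
  refine ⟨K, hK, fun s hs x hx => smoothTransition.zero_of_nonpos ?_⟩
  have hhx : R + |t₀| ≤ h x := hKc hx
  have ht₀ := neg_abs_le t₀
  simp only [graphHomotopy]
  nlinarith [hs.1, hs.2, mul_nonneg hs.1 (show 0 ≤ 2 * h x - R by linarith),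
    mul_nonneg (sub_nonneg.2 hs.2) (show 0 ≤ t₀ + h x - R by linarith)]

theorem sub_mul_spacetimeDiv_cutoff_energy_le (hψ : ContDiff ℝ 2 ψ) (hbox : ∀ p, box m ψ p = 0)
    (hh : ContDiff ℝ 1 h) (hslope : ∀ x, ∑ i, dxs i h x ^ 2 ≤ 1) (hR : 2 * t₀ + 1 ≤ R)
    {s : ℝ} (hs : 0 ≤ s) (x : Spc d) :
    (h x - t₀) * spacetimeDiv (fun q => coneCutoff R h q * energyDensity m ψ q)
      (fun i q => coneCutoff R h q * energyCurrent ψ i q)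
      (graphHomotopy (fun _ => t₀) h (s, x)) ≤ 0 := by
  set p := graphHomotopy (fun _ => t₀) h (s, x)
  have hhx := hh.differentiable one_ne_zero p.2
  have hS : 0 ≤ (h x - t₀) * deriv smoothTransition (R - p.1 - h p.2) :=
    sub_mul_deriv_smoothTransition_nonneg hR hs
  have hdt : dt (coneCutoff R h) p = -deriv smoothTransition (R - p.1 - h p.2) := by
    simp [dt, fderiv_coneCutoff_apply hhx]
  have hdx (i) : dx i (coneCutoff R h) p
      = -deriv smoothTransition (R - p.1 - h p.2) * dxs i h x := by
    rw [dx, fderiv_coneCutoff_apply hhx, zero_add, neg_mul]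
    rfl
  have hdominant : 0 ≤ energyDensity m ψ p + ∑ i, dxs i h x * energyCurrent ψ i p := by
    linarith [neg_le_of_abs_le (abs_sum_mul_energyCurrent_le m ψ (hslope x) p)]
  rw [spacetimeDiv_mul ((contDiff_coneCutoff (n := 1) hh).differentiable one_ne_zero p)
    ((contDiff_energyDensity hψ).differentiable one_ne_zero p)
    fun i => (contDiff_energyCurrent hψ i).differentiable one_ne_zero p,
    spacetimeDiv_energy hψ, hbox, hdt]
  simp only [hdx, mul_assoc, ← Finset.mul_sum, mul_zero, add_zero, ← mul_add]
  linarith [mul_nonneg hS hdominant]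

theorem integrable_cutoff_energyFlux {u : Spc d → ℝ} {K : Set (Spc d)} (hψ : ContDiff ℝ 2 ψ)
    (hh : ContDiff ℝ 1 h) (hu : ContDiff ℝ 1 u) (hK : IsCompact K)
    (hzero : ∀ x ∉ K, coneCutoff R h (u x, x) = 0) :
    Integrable fun x => coneCutoff R h (u x, x) * energyFlux m ψ u x := by
  have hχ := (contDiff_coneCutoff (R := R) (n := 1) hh).continuous
  exact ((hχ.comp (hu.continuous.prodMk continuous_id)).mul
    (continuous_energyFlux hψ hu)).integrable_of_hasCompactSupport
      (HasCompactSupport.intro hK fun x hx => mul_eq_zero_of_left (hzero x hx) _)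

theorem integral_cutoff_energyFlux_le (hψ : ContDiff ℝ 2 ψ) (hbox : ∀ p, box m ψ p = 0)
    (hh : ContDiff ℝ 1 h) (hslope : ∀ x, ∑ i, dxs i h x ^ 2 ≤ 1) (hR : 2 * t₀ + 1 ≤ R)
    {K : Set (Spc d)} (hK : IsCompact K) (hzero : ∀ s ∈ Set.Icc (0 : ℝ) 1, ∀ x ∉ K,
      coneCutoff R h (graphHomotopy (fun _ => t₀) h (s, x)) = 0) :
    ∫ x, coneCutoff R h (h x, x) * energyFlux m ψ h x
      ≤ ∫ x, coneCutoff R h (t₀, x) * energyDensity m ψ (t₀, x) := by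
  have hχ := contDiff_coneCutoff (R := R) (n := 1) hh
  have hle := integral_graphFlux_le (u := fun _ => t₀) (v := h)
    (hχ.mul (contDiff_energyDensity (m := m) hψ))
    (fun i => hχ.mul (contDiff_energyCurrent hψ i)) contDiff_const hh hK
    (fun s hs x hx => mul_eq_zero_of_left (hzero s hs x hx) _)
    (fun i s hs x hx => mul_eq_zero_of_left (hzero s hs x hx) _)
    fun s hs => sub_mul_spacetimeDiv_cutoff_energy_le hψ hbox hh hslope hR hs.1
  simp only [graphFlux_mul] at hle
  exact hle.trans_eq (integral_congr_ae (.of_forall fun x =>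
    congrArg (coneCutoff R h (t₀, x) * ·) (energyFlux_const m ψ t₀ x)))

end Cutoff

section EnergyEstimate

variable {d : ℕ} {m t₀ : ℝ} {ψ : ℝ × Spc d → ℝ} {h : Spc d → ℝ}

theorem setIntegral_energyFlux_le (hψ : ContDiff ℝ 2 ψ) (hbox : ∀ p, box m ψ p = 0)
    (hh : ContDiff ℝ 1 h) (hslope : ∀ x, ∑ i, dxs i h x ^ 2 ≤ 1)
    (hcoer : Tendsto h (cocompact (Spc d)) atTop)
    (hE : Integrable fun x => energyDensity m ψ (t₀, x)) {A : Set (Spc d)} (hA : IsCompact A) :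
    ∫ x in A, energyFlux m ψ h x ≤ ∫ x, energyDensity m ψ (t₀, x) := by
  obtain ⟨b, hb⟩ := (hA.image hh.continuous).bddAbove
  set R := max (2 * t₀ + 1) (2 * b + 1)
  obtain ⟨K, hK, hzero⟩ := exists_isCompact_coneCutoff_eq_zero (R := R) hcoer (le_max_left _ _)
  have hone (x) (hx : x ∈ A) : coneCutoff R h (h x, x) = 1 :=
    smoothTransition.one_of_one_le (by
      linarith [le_max_right (2 * t₀ + 1) (2 * b + 1), hb (Set.mem_image_of_mem h hx)])
  have hnonneg (x) : 0 ≤ coneCutoff R h (h x, x) * energyFlux m ψ h x :=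
    mul_nonneg (smoothTransition.nonneg _) (energyFlux_nonneg m ψ (hslope x))
  calc ∫ x in A, energyFlux m ψ h x
      = ∫ x in A, coneCutoff R h (h x, x) * energyFlux m ψ h x :=
        setIntegral_congr_fun hA.measurableSet fun x hx => by simp only [hone x hx, one_mul]
    _ ≤ ∫ x, coneCutoff R h (h x, x) * energyFlux m ψ h x :=
        setIntegral_le_integral (integrable_cutoff_energyFlux hψ hh hh hK fun x hx => by
          simpa [graphHomotopy] using hzero 1 (by simp) x hx) (.of_forall hnonneg)
    _ ≤ ∫ x, coneCutoff R h (t₀, x) * energyDensity m ψ (t₀, x) :=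
        integral_cutoff_energyFlux_le hψ hbox hh hslope (le_max_left _ _) hK hzero
    _ ≤ ∫ x, energyDensity m ψ (t₀, x) :=
        integral_mono_of_nonneg
          (.of_forall fun x => mul_nonneg (smoothTransition.nonneg _) (energyDensity_nonneg m ψ _))
          hE (.of_forall fun x => mul_le_of_le_one_left (energyDensity_nonneg m ψ _)
            (smoothTransition.le_one _))

theorem integrable_energyFlux (hψ : ContDiff ℝ 2 ψ) (hbox : ∀ p, box m ψ p = 0)
    (hh : ContDiff ℝ 1 h) (hslope : ∀ x, ∑ i, dxs i h x ^ 2 ≤ 1)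
    (hcoer : Tendsto h (cocompact (Spc d)) atTop)
    (hE : Integrable fun x => energyDensity m ψ (t₀, x)) : Integrable (energyFlux m ψ h) :=
  (aecover_closedBall (x := (0 : Spc d)) tendsto_id).integrable_of_integral_bounded_of_nonneg_ae _
    (fun _ => (continuous_energyFlux hψ hh).continuousOn.integrableOn_compact
      (isCompact_closedBall _ _))
    (.of_forall fun x => energyFlux_nonneg m ψ (hslope x))
    (.of_forall fun _ =>
      setIntegral_energyFlux_le hψ hbox hh hslope hcoer hE (isCompact_closedBall _ _))

theorem integral_energyFlux_le (hψ : ContDiff ℝ 2 ψ) (hbox : ∀ p, box m ψ p = 0)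
    (hh : ContDiff ℝ 1 h) (hslope : ∀ x, ∑ i, dxs i h x ^ 2 ≤ 1)
    (hcoer : Tendsto h (cocompact (Spc d)) atTop)
    (hE : Integrable fun x => energyDensity m ψ (t₀, x)) :
    ∫ x, energyFlux m ψ h x ≤ ∫ x, energyDensity m ψ (t₀, x) :=
  le_of_tendsto
    ((aecover_closedBall (x := (0 : Spc d)) tendsto_id).integral_tendsto_of_countably_generated
      (integrable_energyFlux hψ hbox hh hslope hcoer hE))
    (.of_forall fun _ =>
      setIntegral_energyFlux_le hψ hbox hh hslope hcoer hE (isCompact_closedBall _ _))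

end EnergyEstimate

section Hyperboloid

variable {d : ℕ} {τ : ℝ}

/-- The height at `x` of the future hyperboloid `{t² - ‖x‖² = τ²}`. -/
def hyperboloid (τ : ℝ) (x : Spc d) : ℝ :=
  √(τ ^ 2 + ‖x‖ ^ 2)

theorem hyperboloid_sq (τ : ℝ) (x : Spc d) : hyperboloid τ x ^ 2 = τ ^ 2 + ‖x‖ ^ 2 :=
  sq_sqrt (by positivity)

theorem hyperboloid_pos (hτ : τ ≠ 0) (x : Spc d) : 0 < hyperboloid τ x :=
  sqrt_pos.2 (by positivity)

theorem norm_le_hyperboloid (τ : ℝ) (x : Spc d) : ‖x‖ ≤ hyperboloid τ x :=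
  le_sqrt_of_sq_le (by nlinarith [sq_nonneg τ])

theorem tendsto_hyperboloid_cocompact (τ : ℝ) :
    Tendsto (hyperboloid τ) (cocompact (Spc d)) atTop :=
  tendsto_atTop_mono (norm_le_hyperboloid τ) (tendsto_norm_cocompact_atTop)

theorem contDiff_hyperboloid {n : ℕ∞ω} (hτ : τ ≠ 0) : ContDiff ℝ n (hyperboloid (d := d) τ) :=
  (contDiff_const.add (contDiff_norm_sq ℝ)).sqrt fun x => by positivity

theorem dxs_hyperboloid (hτ : τ ≠ 0) (i : Fin d) (x : Spc d) :
    dxs i (hyperboloid τ) x = x i / hyperboloid τ x := by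
  have hpos := hyperboloid_pos hτ x
  have hsq : HasFDerivAt (fun y : Spc d => τ ^ 2 + ‖y‖ ^ 2) (2 • innerSL ℝ x) x :=
    (hasStrictFDerivAt_norm_sq x).hasFDerivAt.const_add _
  rw [dxs, show fderiv ℝ (hyperboloid τ) x = _ from (hsq.sqrt (by positivity)).fderiv]
  simp only [EuclideanSpace.inner_single_right, smul_apply, innerSL_apply_apply, nsmul_eq_mul,
    smul_eq_mul, ← hyperboloid.eq_1, conj_trivial, Nat.cast_ofNat]
  field_simp

theorem sum_dxs_hyperboloid_sq_le_one (hτ : τ ≠ 0) (x : Spc d) :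
    ∑ i, dxs i (hyperboloid τ) x ^ 2 ≤ 1 := by
  have hpos := hyperboloid_pos hτ x
  simp only [dxs_hyperboloid hτ, div_pow, ← Finset.sum_div]
  rw [← EuclideanSpace.real_norm_sq_eq, div_le_one (by positivity), hyperboloid_sq]
  linarith [sq_nonneg τ]

theorem energy_eq_integral_energyFlux (hτ : τ ≠ 0) (m : ℝ) (ψ : ℝ × Spc d → ℝ) :
    energy m τ ψ = ∫ x, energyFlux m ψ (hyperboloid τ) x := by
  refine integral_congr_ae (.of_forall fun x => ?_)
  have hpos := hyperboloid_pos hτ x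
  have hnorm : ∑ i, x i ^ 2 = hyperboloid τ x ^ 2 - τ ^ 2 := by
    rw [hyperboloid_sq, EuclideanSpace.real_norm_sq_eq, add_sub_cancel_left]
  simp only [energyFlux, graphFlux, energyDensity, energyCurrent, dxs_hyperboloid hτ, boost]
  rw [← hyperboloid]
  set t := hyperboloid τ x
  have hboost : ∑ i, (x i * dt ψ (t, x) + t * dx i ψ (t, x)) ^ 2
      = (t ^ 2 - τ ^ 2) * dt ψ (t, x) ^ 2 + 2 * t * dt ψ (t, x) * ∑ i, x i * dx i ψ (t, x)
        + t ^ 2 * ∑ i, dx i ψ (t, x) ^ 2 := by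
    rw [← hnorm, Finset.sum_mul, Finset.mul_sum, Finset.mul_sum, ← Finset.sum_add_distrib,
      ← Finset.sum_add_distrib]
    exact Finset.sum_congr rfl fun i _ => by ring
  have hflux : ∑ i, x i / t * (-2 * (dt ψ (t, x) * dx i ψ (t, x)))
      = -2 * dt ψ (t, x) * (∑ i, x i * dx i ψ (t, x)) / t := by
    rw [Finset.mul_sum, Finset.sum_div]
    exact Finset.sum_congr rfl fun i _ => by ring
  rw [hboost, hflux]
  field_simp
  ring

end Hyperboloid

section Sobolev

variable {d s : ℕ} {f : Spc d → ℝ}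

/-- The integrand of the squared Sobolev norm `HnormSq s f`. -/
def sobolevDensity (s : ℕ) (f : Spc d → ℝ) (x : Spc d) : ℝ :=
  ∑ j ∈ Finset.range (s + 1), ‖iteratedFDeriv ℝ j f x‖ ^ 2

theorem sobolevDensity_nonneg (s : ℕ) (f : Spc d → ℝ) (x : Spc d) : 0 ≤ sobolevDensity s f x :=
  Finset.sum_nonneg fun _ _ => sq_nonneg _

theorem integrable_norm_iteratedFDeriv_sq {j : ℕ} (hf : ContDiff ℝ j f) (hc : HasCompactSupport f) :
    Integrable fun x => ‖iteratedFDeriv ℝ j f x‖ ^ 2 := by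
  refine ((hf.continuous_iteratedFDeriv le_rfl).norm.pow 2).integrable_of_hasCompactSupport
    (HasCompactSupport.intro hc fun x hx => ?_)
  simp [Function.notMem_support.1 fun h => hx (support_iteratedFDeriv_subset j h)]

theorem integrable_sobolevDensity (hf : ContDiff ℝ s f) (hc : HasCompactSupport f) :
    Integrable (sobolevDensity s f) :=
  integrable_finsetSum _ fun _ hj => integrable_norm_iteratedFDeriv_sq
    (hf.of_le (by exact_mod_cast Finset.mem_range_succ_iff.1 hj)) hc

theorem integral_sobolevDensity (hf : ContDiff ℝ s f) (hc : HasCompactSupport f) :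
    ∫ x, sobolevDensity s f x = HnormSq s f :=
  integral_finsetSum _ fun _ hj => integrable_norm_iteratedFDeriv_sq
    (hf.of_le (by exact_mod_cast Finset.mem_range_succ_iff.1 hj)) hc

theorem HnormSq_nonneg (s : ℕ) (f : Spc d → ℝ) : 0 ≤ HnormSq s f :=
  Finset.sum_nonneg fun _ _ => integral_nonneg fun _ => sq_nonneg _

theorem dataJet_sq_le (s : ℕ) (t₀ : ℝ) (φ : ℝ × Spc d → ℝ) (x : Spc d) :
    dataJet s t₀ φ x ^ 2 ≤ 2 * (s + 2) * (sobolevDensity (s + 1) (fun y => φ (t₀, y)) x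
      + sobolevDensity s (fun y => dt φ (t₀, y)) x) := by
  have hf : jetNorm (s + 1) (fun y => φ (t₀, y)) x ^ 2
      ≤ (s + 2) * sobolevDensity (s + 1) (fun y => φ (t₀, y)) x :=
    (jetNorm_sq_le _ _ _).trans_eq (by rw [sobolevDensity]; push_cast; ring)
  have hg : jetNorm s (fun y => dt φ (t₀, y)) x ^ 2
      ≤ (s + 1) * sobolevDensity s (fun y => dt φ (t₀, y)) x := jetNorm_sq_le _ _ _
  have hg₀ := sobolevDensity_nonneg s (fun y => dt φ (t₀, y)) x
  exact add_sq_le.trans (by linarith)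

end Sobolev

section BoostedEnergy

variable {d N : ℕ} {m m₀ t₀ r τ : ℝ} {φ : ℝ × Spc d → ℝ} {K : Set (Spc d)}

theorem energyDensity_le_dataJet_sq (hφ : ContDiff ℝ 1 φ) (m t₀ : ℝ) (x : Spc d) :
    energyDensity m φ (t₀, x) ≤ (1 + d + m ^ 2) * dataJet 0 t₀ φ x ^ 2 := by
  set D := dataJet 0 t₀ φ x
  have hjet : jetNorm 1 (fun y => φ (t₀, y)) x ≤ D :=
    le_add_of_nonneg_right (jetNorm_nonneg _ _ _)
  have hφD : φ (t₀, x) ^ 2 ≤ D ^ 2 :=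
    sq_le_sq.2 (((norm_le_jetNorm 1 (fun y => φ (t₀, y)) x).trans hjet).trans (le_abs_self D))
  have hdtD : dt φ (t₀, x) ^ 2 ≤ D ^ 2 :=
    sq_le_sq.2 (((norm_le_jetNorm 0 (fun y => dt φ (t₀, y)) x).trans
      (le_add_of_nonneg_left (jetNorm_nonneg _ _ _))).trans (le_abs_self D))
  have hdxD (i) : dx i φ (t₀, x) ^ 2 ≤ D ^ 2 := by
    rw [← dxs_slice i (hφ.differentiable one_ne_zero _)]
    exact sq_le_sq.2 ((((norm_le_jetNorm 0 _ x).trans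
      (jetNorm_dxs_le (contDiff_slice hφ t₀) i x)).trans hjet).trans (le_abs_self D))
  calc energyDensity m φ (t₀, x) ≤ D ^ 2 + ∑ _i : Fin d, D ^ 2 + m ^ 2 * D ^ 2 :=
        add_le_add (add_le_add hdtD (Finset.sum_le_sum fun i _ => hdxD i))
          (mul_le_mul_of_nonneg_left hφD (sq_nonneg m))
    _ = (1 + d + m ^ 2) * D ^ 2 := by
        rw [Fin.sum_const, nsmul_eq_mul]
        ring

theorem dataJet_boostList_le_of_tsupport_subset (l : List (Fin d)) (hl : l.length ≤ N)
    (hφ : ContDiff ℝ (l.length + 1 : ℕ) φ) (hbox : ∀ p, box m φ p = 0)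
    (hf : tsupport (fun y => φ (t₀, y)) ⊆ K) (hg : tsupport (fun y => dt φ (t₀, y)) ⊆ K)
    (hK : ∀ x ∈ K, ‖x‖ ≤ r) (x : Spc d) :
    dataJet 0 t₀ (boostList l φ) x
      ≤ (boostConst d N m t₀ * (1 + r)) ^ l.length * dataJet l.length t₀ φ x := by
  have hB := zero_le_one.trans (one_le_boostConst d N m t₀)
  have hjet := dataJet_boostList_le (s := 0) (t₀ := t₀) l ((zero_add _).trans_le hl)
    (by rwa [zero_add]) hbox x
  rw [zero_add] at hjet
  by_cases hx : x ∈ K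
  · refine hjet.trans ?_
    have := dataJet_nonneg l.length t₀ φ x
    gcongr
    exact hK x hx
  · rw [dataJet_eq_zero hf hg hx, mul_zero] at hjet ⊢
    exact hjet

/-- The constant of the energy estimate for up to `N` boosts of a solution of mass `m` with
data at time `t₀` supported in the ball of radius `r`. -/
def energyConst (d N : ℕ) (m t₀ r : ℝ) : ℝ :=
  (1 + d + m ^ 2) * (boostConst d N m t₀ * (1 + r)) ^ (2 * N) * (2 * (N + 2))

theorem energyConst_pos (d N : ℕ) (m t₀ : ℝ) (hr : 0 ≤ r) : 0 < energyConst d N m t₀ r := by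
  have hB := zero_lt_one.trans_le (one_le_boostConst d N m t₀)
  unfold energyConst
  positivity

theorem energyConst_mono (h : m ^ 2 ≤ m₀ ^ 2) (hr : 0 ≤ r) (d N : ℕ) (t₀ : ℝ) :
    energyConst d N m t₀ r ≤ energyConst d N m₀ t₀ r := by
  have hB := zero_le_one.trans (one_le_boostConst d N m t₀)
  have hB₀ := boostConst_mono h d N t₀
  unfold energyConst
  gcongr

theorem energyDensity_boostList_le (l : List (Fin d)) (hl : l.length ≤ N)
    (hφ : ContDiff ℝ (l.length + 1 : ℕ) φ) (hbox : ∀ p, box m φ p = 0)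
    (hf : tsupport (fun y => φ (t₀, y)) ⊆ K) (hg : tsupport (fun y => dt φ (t₀, y)) ⊆ K)
    (hr : 0 ≤ r) (hK : ∀ x ∈ K, ‖x‖ ≤ r) (x : Spc d) :
    energyDensity m (boostList l φ) (t₀, x)
      ≤ energyConst d N m t₀ r * (sobolevDensity (l.length + 1) (fun y => φ (t₀, y)) x
        + sobolevDensity l.length (fun y => dt φ (t₀, y)) x) := by
  have hB : 1 ≤ boostConst d N m t₀ * (1 + r) :=
    one_le_mul_of_one_le_of_one_le (one_le_boostConst d N m t₀) (by linarith)
  have hψ : ContDiff ℝ 1 (boostList l φ) :=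
    contDiff_boostList l (n := 1) (by rwa [add_comm])
  have hS : 0 ≤ sobolevDensity (l.length + 1) (fun y => φ (t₀, y)) x
      + sobolevDensity l.length (fun y => dt φ (t₀, y)) x :=
    add_nonneg (sobolevDensity_nonneg _ _ _) (sobolevDensity_nonneg _ _ _)
  calc energyDensity m (boostList l φ) (t₀, x)
      ≤ (1 + d + m ^ 2) * dataJet 0 t₀ (boostList l φ) x ^ 2 :=
        energyDensity_le_dataJet_sq hψ m t₀ x
    _ ≤ (1 + d + m ^ 2) * ((boostConst d N m t₀ * (1 + r)) ^ l.length
          * dataJet l.length t₀ φ x) ^ 2 := by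
        gcongr
        · exact dataJet_nonneg _ _ _ _
        · exact dataJet_boostList_le_of_tsupport_subset l hl hφ hbox hf hg hK x
    _ = (1 + d + m ^ 2) * (boostConst d N m t₀ * (1 + r)) ^ (2 * l.length)
          * dataJet l.length t₀ φ x ^ 2 := by ring
    _ ≤ (1 + d + m ^ 2) * (boostConst d N m t₀ * (1 + r)) ^ (2 * N)
          * (2 * (N + 2) * (sobolevDensity (l.length + 1) (fun y => φ (t₀, y)) x
            + sobolevDensity l.length (fun y => dt φ (t₀, y)) x)) := by
        gcongr
        refine (dataJet_sq_le _ _ _ _).trans ?_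
        gcongr
    _ = _ := by rw [energyConst]; ring

theorem energy_boostList_le (l : List (Fin d)) (hl : l.length ≤ N)
    (hφ : ContDiff ℝ (l.length + 2 : ℕ) φ) (hbox : ∀ p, box m φ p = 0)
    (hf : tsupport (fun y => φ (t₀, y)) ⊆ K) (hg : tsupport (fun y => dt φ (t₀, y)) ⊆ K)
    (hr : 0 ≤ r) (hK : ∀ x ∈ K, ‖x‖ ≤ r) (hτ : τ ≠ 0) :
    energy m τ (boostList l φ)
      ≤ energyConst d N m t₀ r * (HnormSq (l.length + 1) (fun y => φ (t₀, y))
        + HnormSq l.length (fun y => dt φ (t₀, y))) := by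
  have hcompact {u : Spc d → ℝ} (hu : tsupport u ⊆ K) : HasCompactSupport u :=
    (isCompact_closedBall (0 : Spc d) r).of_isClosed_subset (isClosed_tsupport u)
      fun x hx => mem_closedBall_zero_iff.2 (hK x (hu hx))
  have hf' : ContDiff ℝ (l.length + 1 : ℕ) fun y => φ (t₀, y) :=
    (contDiff_slice hφ t₀).of_le (by exact_mod_cast Nat.le_succ _)
  have hg' : ContDiff ℝ l.length fun y => dt φ (t₀, y) :=
    contDiff_slice (contDiff_dt hφ (by exact_mod_cast Nat.le_succ _)) t₀
  have hfint := integrable_sobolevDensity hf' (hcompact hf)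
  have hgint := integrable_sobolevDensity hg' (hcompact hg)
  have hψ : ContDiff ℝ 2 (boostList l φ) := contDiff_boostList l (n := 2) (by rwa [add_comm])
  have hle := energyDensity_boostList_le l hl (hφ.of_le (by exact_mod_cast Nat.le_succ _)) hbox
    hf hg hr hK
  have hint := (hfint.add hgint).const_mul (energyConst d N m t₀ r)
  have hE : Integrable fun x => energyDensity m (boostList l φ) (t₀, x) :=
    hint.mono' (contDiff_slice (contDiff_energyDensity hψ) t₀).continuous.aestronglyMeasurable
      (.of_forall fun x => by
        rw [norm_of_nonneg (energyDensity_nonneg _ _ _)]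
        exact hle x)
  calc energy m τ (boostList l φ)
      = ∫ x, energyFlux m (boostList l φ) (hyperboloid τ) x :=
        energy_eq_integral_energyFlux hτ m _
    _ ≤ ∫ x, energyDensity m (boostList l φ) (t₀, x) :=
        integral_energyFlux_le hψ (box_boostList l hφ hbox) (contDiff_hyperboloid hτ)
          (sum_dxs_hyperboloid_sq_le_one hτ) (tendsto_hyperboloid_cocompact τ) hE
    _ ≤ _ := integral_mono hE hint hle
    _ = _ := by
        simp only [Pi.add_apply]
        rw [integral_const_mul, integral_add hfint hgint, integral_sobolevDensity hf' (hcompact hf),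
          integral_sobolevDensity hg' (hcompact hg)]

end BoostedEnergy

theorem boosted_energy_bound_general (d N : ℕ) (m₀ t₀ : ℝ) {K : Set (Spc d)}
    (hK : Bornology.IsBounded K) :
    ∃ C : ℝ, 0 < C ∧
      ∀ m : ℝ, |m| ≤ m₀ →
      ∀ φ : ℝ × Spc d → ℝ, ContDiff ℝ (N + 2 : ℕ) φ → (∀ p, box m φ p = 0) →
      ∀ f g : Spc d → ℝ, tsupport f ⊆ K → tsupport g ⊆ K →
        (∀ x, φ (t₀, x) = f x) → (∀ x, dt φ (t₀, x) = g x) →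
      ∀ l : List (Fin d), l.length ≤ N → ∀ τ : ℝ, τ ≠ 0 →
        energy m τ (boostList l φ)
          ≤ C * (HnormSq (l.length + 1) f + HnormSq l.length g) := by
  obtain ⟨r, hr, hKr⟩ := hK.exists_pos_norm_le
  refine ⟨energyConst d N m₀ t₀ r, energyConst_pos d N m₀ t₀ hr.le,
    fun m hm φ hφ hbox f g hf hg hφf hφg l hl τ hτ => ?_⟩
  obtain rfl := funext hφf
  obtain rfl := funext hφg
  have hm' : m ^ 2 ≤ m₀ ^ 2 := sq_le_sq.2 (hm.trans (le_abs_self m₀))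
  have hφ' : ContDiff ℝ (l.length + 2 : ℕ) φ := hφ.of_le (by exact_mod_cast (by omega))
  exact (energy_boostList_le l hl hφ' hbox hf hg hr.le hKr hτ).trans
    (mul_le_mul_of_nonneg_right (energyConst_mono hm' hr.le d N t₀)
      (add_nonneg (HnormSq_nonneg _ _) (HnormSq_nonneg _ _)))

/-- for data supported in the unit ball and k ≤ ⌊d/2⌋ + 1, the
hyperboloidal energies of iterated boosts of the solution are controlled by Sobolev
norms of the data, uniformly in τ and in m ≤ m₀. -/
theorem boosted_energy_bound (d : ℕ) (hd : 1 ≤ d) (m₀ : ℝ) (hm₀ : 0 < m₀) :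
    ∃ C : ℝ, 0 < C ∧
      ∀ (m : ℝ), 0 < m → m ≤ m₀ →
      ∀ (φ : ℝ × Spc d → ℝ), ContDiff ℝ (⊤ : ℕ∞) φ →
        (∀ p : ℝ × Spc d, box m φ p = 0) →
      ∀ (f g : Spc d → ℝ), ContDiff ℝ (⊤ : ℕ∞) f → ContDiff ℝ (⊤ : ℕ∞) g →
        tsupport f ⊆ Metric.ball 0 1 → tsupport g ⊆ Metric.ball 0 1 →
        (∀ x, φ (2, x) = f x) → (∀ x, dt φ (2, x) = g x) →
      ∀ (l : List (Fin d)), l.length ≤ d / 2 + 1 →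
      ∀ (τ : ℝ), 0 < τ →
        energy m τ (boostList l φ)
          ≤ C * (HnormSq (l.length + 1) f + HnormSq l.length g) := by
  obtain ⟨C, hC, hbound⟩ := boosted_energy_bound_general d (d / 2 + 1) m₀ 2
    (K := Metric.ball (0 : Spc d) 1) Metric.isBounded_ball
  exact ⟨C, hC, fun m hm hmm φ hφ hbox f g _ _ hf hg hφf hφg l hl τ hτ =>
    hbound m ((abs_of_pos hm).trans_le hmm) φ (contDiff_infty.1 hφ _) hbox
      f g hf hg hφf hφg l hl τ hτ.ne'⟩
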